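/- For every (d1,d2) ∈ ℝ₊², R(d1,d2) ≤ R_U*(d1,d2) ≤ max{ R^{WZ}_{X|Y}(d1), R^{WZ}_{Y|X}(d2) }; that is, the one-description upper bound R_U* is at least as tight an upper bound on the rate-distortion function as the compress-linear upper bound. -/

import Mathlib

open scoped BigOperators Classical

noncomputable section

namespace TWR

/-- Base-2 Shannon entropy of a finitely supported distribution (with the
convention `0 * log 0 = 0`, automatic since `Real.logb 2 0 = 0`). -/
def H2 {α : Type} [Fintype α] (p : α → ℝ) : ℝ :=
  -∑ a, p a * Real.logb 2 (p a)

/-- `p` is a probability mass function. -/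
def IsPmf {α : Type} [Fintype α] (p : α → ℝ) : Prop :=
  (∀ a, 0 ≤ p a) ∧ ∑ a, p a = 1

/-- `W` is a conditional pmf. -/
def IsCondPmf {α β : Type} [Fintype β] (W : α → β → ℝ) : Prop :=
  ∀ a, IsPmf (W a)

/-- Mutual information `I(A;B)` (base 2) of a joint pmf on `α × β`. -/
def MI {α β : Type} [Fintype α] [Fintype β] (p : α × β → ℝ) : ℝ :=
  H2 (fun a => ∑ b, p (a, b)) + H2 (fun b => ∑ a, p (a, b)) - H2 p

/-- Conditional entropy `H(A|B)` of a joint pmf on `α × β`. -/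
def condH {α β : Type} [Fintype α] [Fintype β] (p : α × β → ℝ) : ℝ :=
  H2 p - H2 (fun b => ∑ a, p (a, b))

/-- Conditional mutual information `I(A;C|B)` of a joint pmf on `α × β × γ`,
conditioning on the middle coordinate (`I(A;C|B) = H(A,B)+H(B,C)-H(A,B,C)-H(B)`). -/
def condMI {α β γ : Type} [Fintype α] [Fintype β] [Fintype γ] (p : α × β × γ → ℝ) : ℝ :=
  H2 (fun ab : α × β => ∑ c, p (ab.1, ab.2, c)) +
    H2 (fun bc : β × γ => ∑ a, p (a, bc.1, bc.2)) -
    H2 p - H2 (fun b : β => ∑ a, ∑ c, p (a, b, c))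

/-- Markov chain `A − B − C` for a joint pmf on `α × β × γ`. -/
def Markov {α β γ : Type} [Fintype α] [Fintype β] [Fintype γ] (p : α × β × γ → ℝ) : Prop :=
  ∀ a b c, p (a, b, c) * (∑ a', ∑ c', p (a', b, c')) =
    (∑ c', p (a, b, c')) * (∑ a', p (a', b, c))

variable {𝒳 𝒴 Xh Yh 𝒲 𝒰 𝒱 : Type}
variable [Fintype 𝒳] [Fintype 𝒴] [Fintype Xh] [Fintype Yh]
variable [Fintype 𝒲] [Fintype 𝒰] [Fintype 𝒱]

/-- The i.i.d. block source. -/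
def iid (q : 𝒳 × 𝒴 → ℝ) (n : ℕ) : (Fin n → 𝒳) × (Fin n → 𝒴) → ℝ :=
  fun xy => ∏ i, q (xy.1 i, xy.2 i)

/-- Average distortion at receiver 1 of the RD code `(f, g1, ·)`. -/
def Delta1 (q : 𝒳 × 𝒴 → ℝ) (δ1 : 𝒳 → Xh → ℝ) {n m : ℕ}
    (f : (Fin n → 𝒳) × (Fin n → 𝒴) → Fin m)
    (g1 : Fin m × (Fin n → 𝒴) → Fin n → Xh) : ℝ :=
  ∑ xy : (Fin n → 𝒳) × (Fin n → 𝒴),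
    iid q n xy * ((n : ℝ)⁻¹ * ∑ i, δ1 (xy.1 i) (g1 (f xy, xy.2) i))

/-- Average distortion at receiver 2 of the RD code `(f, ·, g2)`. -/
def Delta2 (q : 𝒳 × 𝒴 → ℝ) (δ2 : 𝒴 → Yh → ℝ) {n m : ℕ}
    (f : (Fin n → 𝒳) × (Fin n → 𝒴) → Fin m)
    (g2 : Fin m × (Fin n → 𝒳) → Fin n → Yh) : ℝ :=
  ∑ xy : (Fin n → 𝒳) × (Fin n → 𝒴),
    iid q n xy * ((n : ℝ)⁻¹ * ∑ i, δ2 (xy.2 i) (g2 (f xy, xy.1) i))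

/-- `r` is a `(d1,d2)`-achievable rate (source coding). -/
def RDAchievable (q : 𝒳 × 𝒴 → ℝ) (δ1 : 𝒳 → Xh → ℝ) (δ2 : 𝒴 → Yh → ℝ)
    (d1 d2 r : ℝ) : Prop :=
  ∀ ε > (0 : ℝ), ∃ (n m : ℕ) (f : (Fin n → 𝒳) × (Fin n → 𝒴) → Fin m)
    (g1 : Fin m × (Fin n → 𝒴) → Fin n → Xh)
    (g2 : Fin m × (Fin n → 𝒳) → Fin n → Yh),
    0 < n ∧ Real.logb 2 m / n ≤ r + ε ∧
    Delta1 q δ1 f g1 ≤ d1 + ε ∧ Delta2 q δ2 f g2 ≤ d2 + ε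

/-- The rate-distortion function `R(d1,d2)`. -/
def RD (q : 𝒳 × 𝒴 → ℝ) (δ1 : 𝒳 → Xh → ℝ) (δ2 : 𝒴 → Yh → ℝ) (d1 d2 : ℝ) : ℝ :=
  sInf {r : ℝ | 0 ≤ r ∧ RDAchievable q δ1 δ2 d1 d2 r}

/-- `r` is `(d1,d2)`-achievable with common reconstructions. -/
def CRAchievable (q : 𝒳 × 𝒴 → ℝ) (δ1 : 𝒳 → Xh → ℝ) (δ2 : 𝒴 → Yh → ℝ)
    (d1 d2 r : ℝ) : Prop :=
  ∀ ε > (0 : ℝ), ∃ (n m : ℕ) (f : (Fin n → 𝒳) × (Fin n → 𝒴) → Fin m)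
    (g1 : Fin m × (Fin n → 𝒴) → Fin n → Xh)
    (g2 : Fin m × (Fin n → 𝒳) → Fin n → Yh)
    (φ1 : Fin m × (Fin n → 𝒴) → Fin n → Yh)
    (φ2 : Fin m × (Fin n → 𝒳) → Fin n → Xh),
    0 < n ∧ Real.logb 2 m / n ≤ r + ε ∧
    Delta1 q δ1 f g1 ≤ d1 + ε ∧ Delta2 q δ2 f g2 ≤ d2 + ε ∧
    (∑ xy : (Fin n → 𝒳) × (Fin n → 𝒴),
      if φ2 (f xy, xy.1) = g1 (f xy, xy.2) then 0 else iid q n xy) ≤ ε ∧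
    (∑ xy : (Fin n → 𝒳) × (Fin n → 𝒴),
      if φ1 (f xy, xy.2) = g2 (f xy, xy.1) then 0 else iid q n xy) ≤ ε

/-- The common-reconstruction rate-distortion function `R_CR(d1,d2)`. -/
def CRRD (q : 𝒳 × 𝒴 → ℝ) (δ1 : 𝒳 → Xh → ℝ) (δ2 : 𝒴 → Yh → ℝ) (d1 d2 : ℝ) : ℝ :=
  sInf {r : ℝ | 0 ≤ r ∧ CRAchievable q δ1 δ2 d1 d2 r}

/-- The conditional rate-distortion function `R_{X|Y}(d1)`. -/
def condRD (q : 𝒳 × 𝒴 → ℝ) (δ1 : 𝒳 → Xh → ℝ) (d1 : ℝ) : ℝ :=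
  sInf {r : ℝ | ∃ W : 𝒳 × 𝒴 → Xh → ℝ, IsCondPmf W ∧
    (∑ x, ∑ y, ∑ xh, q (x, y) * W (x, y) xh * δ1 x xh) ≤ d1 ∧
    r = condMI (fun t : 𝒳 × 𝒴 × Xh => q (t.1, t.2.1) * W (t.1, t.2.1) t.2.2)}

/-- Swap the two components of a joint source. -/
def swap (q : 𝒳 × 𝒴 → ℝ) : 𝒴 × 𝒳 → ℝ := fun t => q (t.2, t.1)

/-- The marginal rate-distortion function `R_X(d)`. -/
def margRD (qX : 𝒳 → ℝ) (δ1 : 𝒳 → Xh → ℝ) (d1 : ℝ) : ℝ :=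
  sInf {r : ℝ | ∃ W : 𝒳 → Xh → ℝ, IsCondPmf W ∧
    (∑ x, ∑ xh, qX x * W x xh * δ1 x xh) ≤ d1 ∧
    r = MI (fun t : 𝒳 × Xh => qX t.1 * W t.1 t.2)}

def margX (q : 𝒳 × 𝒴 → ℝ) : 𝒳 → ℝ := fun x => ∑ y, q (x, y)
def margY (q : 𝒳 × 𝒴 → ℝ) : 𝒴 → ℝ := fun y => ∑ x, q (x, y)

/-- The joint rate-distortion function `R_{XY}(d1,d2)`. -/
def jointRD (q : 𝒳 × 𝒴 → ℝ) (δ1 : 𝒳 → Xh → ℝ) (δ2 : 𝒴 → Yh → ℝ) (d1 d2 : ℝ) : ℝ :=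
  sInf {r : ℝ | ∃ W : 𝒳 × 𝒴 → Xh × Yh → ℝ, IsCondPmf W ∧
    (∑ xy : 𝒳 × 𝒴, ∑ z : Xh × Yh, q xy * W xy z * δ1 xy.1 z.1) ≤ d1 ∧
    (∑ xy : 𝒳 × 𝒴, ∑ z : Xh × Yh, q xy * W xy z * δ2 xy.2 z.2) ≤ d2 ∧
    r = MI (fun t : (𝒳 × 𝒴) × (Xh × Yh) => q t.1 * W t.1 t.2)}

/-- The Wyner–Ziv rate-distortion function `R^{WZ}_{X|Y}(d1)`
(with auxiliary alphabet of cardinality `|𝒳| + 1`). -/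
def wzRD (q : 𝒳 × 𝒴 → ℝ) (δ1 : 𝒳 → Xh → ℝ) (d1 : ℝ) : ℝ :=
  sInf {r : ℝ | ∃ p : Fin (Fintype.card 𝒳 + 1) × 𝒳 × 𝒴 → ℝ, IsPmf p ∧
    (∀ x y, (∑ a, p (a, x, y)) = q (x, y)) ∧ Markov p ∧
    (∃ π1 : Fin (Fintype.card 𝒳 + 1) × 𝒴 → Xh,
      (∑ a, ∑ x, ∑ y, p (a, x, y) * δ1 x (π1 (a, y))) ≤ d1) ∧
    r = condMI (fun t : 𝒳 × 𝒴 × Fin (Fintype.card 𝒳 + 1) => p (t.2.2, t.1, t.2.1))}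

/-- The set over which the single-letter CR formula
`max{I(X;X̂,Ŷ|Y), I(Y;X̂,Ŷ|X)}` is minimised. -/
def crFormulaSet (q : 𝒳 × 𝒴 → ℝ) (δ1 : 𝒳 → Xh → ℝ) (δ2 : 𝒴 → Yh → ℝ)
    (d1 d2 : ℝ) : Set ℝ :=
  {r : ℝ | ∃ W : 𝒳 × 𝒴 → Xh × Yh → ℝ, IsCondPmf W ∧
    (∑ x, ∑ y, ∑ z : Xh × Yh, q (x, y) * W (x, y) z * δ1 x z.1) ≤ d1 ∧
    (∑ x, ∑ y, ∑ z : Xh × Yh, q (x, y) * W (x, y) z * δ2 y z.2) ≤ d2 ∧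
    r = max
      (condMI (fun t : 𝒳 × 𝒴 × (Xh × Yh) => q (t.1, t.2.1) * W (t.1, t.2.1) t.2.2))
      (condMI (fun t : 𝒴 × 𝒳 × (Xh × Yh) => q (t.2.1, t.1) * W (t.2.1, t.1) t.2.2))}

/-- Joint law of source blocks and channel outputs for a JSC encoder. -/
def jscP (q : 𝒳 × 𝒴 → ℝ) (qUV : 𝒲 → 𝒰 × 𝒱 → ℝ) {n m : ℕ}
    (f : (Fin n → 𝒳) × (Fin n → 𝒴) → Fin m → 𝒲)
    (x : Fin n → 𝒳) (y : Fin n → 𝒴) (u : Fin m → 𝒰) (v : Fin m → 𝒱) : ℝ :=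
  (∏ i, q (x i, y i)) * ∏ j, qUV (f (x, y) j) (u j, v j)

/-- `(d1,d2)` is achievable by joint source-channel coding with source rate `κs`
and channel rate `κc` (bandwidth expansion `κc/κs`). -/
def JSCAchievable (q : 𝒳 × 𝒴 → ℝ) (qUV : 𝒲 → 𝒰 × 𝒱 → ℝ)
    (δ1 : 𝒳 → Xh → ℝ) (δ2 : 𝒴 → Yh → ℝ) (κs κc d1 d2 : ℝ) : Prop :=
  ∀ ε > (0 : ℝ), ∃ (t n m : ℕ) (f : (Fin n → 𝒳) × (Fin n → 𝒴) → Fin m → 𝒲)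
    (g1 : (Fin m → 𝒰) × (Fin n → 𝒴) → Fin n → Xh)
    (g2 : (Fin m → 𝒱) × (Fin n → 𝒳) → Fin n → Yh),
    0 < t ∧ (n : ℝ) = κs * t ∧ (m : ℝ) = κc * t ∧
    (∑ x : Fin n → 𝒳, ∑ y : Fin n → 𝒴, ∑ u : Fin m → 𝒰, ∑ v : Fin m → 𝒱,
      jscP q qUV f x y u v * ((n : ℝ)⁻¹ * ∑ i, δ1 (x i) (g1 (u, y) i))) ≤ d1 + ε ∧
    (∑ x : Fin n → 𝒳, ∑ y : Fin n → 𝒴, ∑ u : Fin m → 𝒰, ∑ v : Fin m → 𝒱,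
      jscP q qUV f x y u v * ((n : ℝ)⁻¹ * ∑ i, δ2 (y i) (g2 (v, x) i))) ≤ d2 + ε

/-- `(d1,d2)` is achievable by joint source-channel coding with common
reconstructions, source rate `κs` and channel rate `κc`. -/
def CRJSCAchievable (q : 𝒳 × 𝒴 → ℝ) (qUV : 𝒲 → 𝒰 × 𝒱 → ℝ)
    (δ1 : 𝒳 → Xh → ℝ) (δ2 : 𝒴 → Yh → ℝ) (κs κc d1 d2 : ℝ) : Prop :=
  ∀ ε > (0 : ℝ), ∃ (t n m : ℕ) (f : (Fin n → 𝒳) × (Fin n → 𝒴) → Fin m → 𝒲)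
    (g1 : (Fin m → 𝒰) × (Fin n → 𝒴) → Fin n → Xh)
    (g2 : (Fin m → 𝒱) × (Fin n → 𝒳) → Fin n → Yh)
    (φ1 : (Fin m → 𝒰) × (Fin n → 𝒴) → Fin n → Yh)
    (φ2 : (Fin m → 𝒱) × (Fin n → 𝒳) → Fin n → Xh),
    0 < t ∧ (n : ℝ) = κs * t ∧ (m : ℝ) = κc * t ∧
    (∑ x : Fin n → 𝒳, ∑ y : Fin n → 𝒴, ∑ u : Fin m → 𝒰, ∑ v : Fin m → 𝒱,
      jscP q qUV f x y u v * ((n : ℝ)⁻¹ * ∑ i, δ1 (x i) (g1 (u, y) i))) ≤ d1 + ε ∧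
    (∑ x : Fin n → 𝒳, ∑ y : Fin n → 𝒴, ∑ u : Fin m → 𝒰, ∑ v : Fin m → 𝒱,
      jscP q qUV f x y u v * ((n : ℝ)⁻¹ * ∑ i, δ2 (y i) (g2 (v, x) i))) ≤ d2 + ε ∧
    (∑ x : Fin n → 𝒳, ∑ y : Fin n → 𝒴, ∑ u : Fin m → 𝒰, ∑ v : Fin m → 𝒱,
      if φ2 (v, x) = g1 (u, y) then 0 else jscP q qUV f x y u v) ≤ ε ∧
    (∑ x : Fin n → 𝒳, ∑ y : Fin n → 𝒴, ∑ u : Fin m → 𝒰, ∑ v : Fin m → 𝒱,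
      if φ1 (u, y) = g2 (v, x) then 0 else jscP q qUV f x y u v) ≤ ε

/-- `I(W;U)` under the joint law `pW · qUV` (U-marginal of the broadcast channel). -/
def chMIU (qUV : 𝒲 → 𝒰 × 𝒱 → ℝ) (pW : 𝒲 → ℝ) : ℝ :=
  MI (fun t : 𝒲 × 𝒰 => pW t.1 * ∑ v, qUV t.1 (t.2, v))

/-- `I(W;V)` under the joint law `pW · qUV` (V-marginal of the broadcast channel). -/
def chMIV (qUV : 𝒲 → 𝒰 × 𝒱 → ℝ) (pW : 𝒲 → ℝ) : ℝ :=
  MI (fun t : 𝒲 × 𝒱 => pW t.1 * ∑ u, qUV t.1 (u, t.2))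

/-- The doubly symmetric binary source with crossover probability `ρ`. -/
def dsbs (ρ : ℝ) : Bool × Bool → ℝ :=
  fun t => if t.1 = t.2 then (1 - ρ) / 2 else ρ / 2

/-- The Hamming distortion measure. -/
def dHam {α : Type} : α → α → ℝ := fun a b => if a = b then 0 else 1

/-- The binary entropy function (base 2). -/
def binEnt (x : ℝ) : ℝ := -(x * Real.logb 2 x) - (1 - x) * Real.logb 2 (1 - x)

/-- A difference distortion measure built from a per-letter function of the
(modular) difference. -/
def diffD {l : ℕ} (δ : Fin l → ℝ) : Fin l → Fin l → ℝ := fun a b => δ (a - b)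

/-- Capacity of the modulo-additive channel with noise `pN` and input
distortion constraint `d`. -/
def Cadd {l : ℕ} (δ : Fin l → ℝ) (d : ℝ) (pN : Fin l → ℝ) : ℝ :=
  sSup {r : ℝ | ∃ pW : Fin l → ℝ, IsPmf pW ∧ (∑ w, pW w * δ w) ≤ d ∧
    r = MI (fun t : Fin l × Fin l => pW t.1 * pN (t.2 - t.1))}

/-- The minimax (worst-noise) capacity under distortion constraint `d`. -/
def Cworst {l : ℕ} (δ : Fin l → ℝ) (d : ℝ) : ℝ :=
  sInf {r : ℝ | ∃ pN : Fin l → ℝ, IsPmf pN ∧ (∑ x, pN x * δ x) ≤ d ∧ r = Cadd δ d pN}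

/-- Wyner's common information `K(X;Y)` (auxiliary alphabet of size 4). -/
def wynerK (q : 𝒳 × 𝒴 → ℝ) : ℝ :=
  sInf {r : ℝ | ∃ W : 𝒳 × 𝒴 → Fin 4 → ℝ, IsCondPmf W ∧
    Markov (fun t : 𝒳 × Fin 4 × 𝒴 => q (t.1, t.2.2) * W (t.1, t.2.2) t.2.1) ∧
    r = MI (fun t : (𝒳 × 𝒴) × Fin 4 => q t.1 * W t.1 t.2)}

/-- The one-description (Kimura–Uyematsu) upper bound `R_U*(d1,d2)`. -/
def oneDescUB (q : 𝒳 × 𝒴 → ℝ) (δ1 : 𝒳 → Xh → ℝ) (δ2 : 𝒴 → Yh → ℝ) (d1 d2 : ℝ) : ℝ :=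
  sInf {r : ℝ | ∃ W : 𝒳 × 𝒴 → Fin (Fintype.card 𝒳 * Fintype.card 𝒴 + 2) → ℝ,
    IsCondPmf W ∧
    (∃ π1 : Fin (Fintype.card 𝒳 * Fintype.card 𝒴 + 2) × 𝒴 → Xh,
      (∑ x, ∑ y, ∑ c, q (x, y) * W (x, y) c * δ1 x (π1 (c, y))) ≤ d1) ∧
    (∃ π2 : Fin (Fintype.card 𝒳 * Fintype.card 𝒴 + 2) × 𝒳 → Yh,
      (∑ x, ∑ y, ∑ c, q (x, y) * W (x, y) c * δ2 y (π2 (c, x))) ≤ d2) ∧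
    r = max
      (condMI (fun t : 𝒳 × 𝒴 × Fin (Fintype.card 𝒳 * Fintype.card 𝒴 + 2) =>
        q (t.1, t.2.1) * W (t.1, t.2.1) t.2.2))
      (condMI (fun t : 𝒴 × 𝒳 × Fin (Fintype.card 𝒳 * Fintype.card 𝒴 + 2) =>
        q (t.2.1, t.1) * W (t.2.1, t.1) t.2.2))}

end TWR

/-!
Two Wyner–Ziv descriptions, `A` generated from `X` alone and `B` from `Y` alone, form the single
description `C = (A, B)`: receiver 1, who knows `Y`, learns nothing about `X` from `B`, and
symmetrically, so rates and distortions are unchanged. To fit `C` into an alphabet of size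
`|𝒳||𝒴| + 2`, take the weights of the pairs `(a, b)` as variables of a linear program that fixes the
joint law, keeps three of the two rates and two distortions equal and minimises the fourth. Its
basic solutions have up to `|𝒳||𝒴| + 3` pairs, one too many. To drop one constraint, first make the
weights of `A` basic by themselves, and then tilt the product weights along the only remaining
degree of freedom, so that the rate of `A` cannot increase on any smaller support.

That a description `C` is achievable at any rate above `max {I(X;C|Y), I(Y;C|X)}` is seen by random
binning: cover the source by a random codebook drawn from the law of `C` and send the index of a
random bin, within which each receiver singles out the codeword typical with its own side
information.
-/

namespace TWR

section LinearProgramming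

open Function (support)
open Matrix

variable {I V E : Type*} [Fintype I] [AddCommGroup V] [Module ℝ V] [AddCommGroup E] [Module ℝ E]

theorem exists_neg_of_sum_mul_eq_zero {d ρ : I → ℝ} (hd : d ≠ 0)
    (hρ : ∀ i ∈ support d, 0 < ρ i) (h : ∑ i, d i * ρ i = 0) : ∃ i, d i < 0 := by
  by_contra! hnonneg
  refine hd (funext fun i => by_contra fun hi => ?_)
  have hterm : ∀ i, 0 ≤ d i * ρ i := fun i => by
    by_cases hi : d i = 0
    · simp [hi]
    · exact mul_nonneg (hnonneg i) (hρ i hi).le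
  have hzero := (Fintype.sum_eq_zero_iff_of_nonneg hterm).mp h
  exact mul_ne_zero hi (hρ i hi).ne' (congrFun hzero i)

theorem exists_pos_step_to_boundary {I : Type*} [Finite I] {w d : I → ℝ} (hw : 0 ≤ w)
    (hd : support d ⊆ support w)
    (hneg : ∃ i, d i < 0) :
    ∃ t > 0, (∀ i, 0 ≤ w i + t * d i) ∧ ∃ i, d i < 0 ∧ w i + t * d i = 0 := by
  cases nonempty_fintype I
  obtain ⟨i₀, hi₀⟩ := hneg
  obtain ⟨i, hi, hmin⟩ := Finset.exists_min_image (Finset.univ.filter fun i => d i < 0)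
    (fun i => w i / -d i) ⟨i₀, by simpa using hi₀⟩
  replace hi : d i < 0 := by simpa using hi
  have hwi : 0 < w i := (hw i).lt_of_ne (hd hi.ne).symm
  refine ⟨w i / -d i, div_pos hwi (neg_pos.mpr hi), fun k => ?_, i, hi, ?_⟩
  · rcases lt_or_ge (d k) 0 with hk | hk
    · have := (le_div_iff₀ (neg_pos.mpr hk)).mp (hmin k (by simpa using hk))
      linarith
    · exact add_nonneg (hw k) (mul_nonneg (div_nonneg hwi.le (neg_pos.mpr hi).le) hk)
  · field_simp [hi.ne]
    ring

theorem linearIndepOn_iff_forall_support_subset {N : I → V} {s : Set I} :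
    LinearIndepOn ℝ N s ↔
      ∀ d : I → ℝ, support d ⊆ s → ∑ i, d i • N i = 0 → d = 0 := by
  rw [linearIndepOn_iff]
  constructor
  · intro h d hds hd
    have := h (Finsupp.equivFunOnFinite.symm d)
      (by simpa [Finsupp.mem_supported] using hds)
      (by simpa [Finsupp.linearCombination_apply, Finsupp.sum_fintype] using hd)
    exact funext (DFunLike.congr_fun this)
  · intro h l hl hsum
    refine DFunLike.coe_injective (h l ?_ ?_)
    · simpa [Finsupp.mem_supported] using hl
    · simpa [Finsupp.linearCombination_apply, Finsupp.sum_fintype] using hsum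

theorem exists_nonneg_support_ssubset {N : I → V} {e : V →ₗ[ℝ] ℝ} {w : I → ℝ} (o : I → ℝ)
    (hw : 0 ≤ w) (he : ∀ i ∈ support w, 0 < e (N i))
    (hdep : ¬ LinearIndepOn ℝ N (support w)) :
    ∃ w' : I → ℝ, 0 ≤ w' ∧ support w' ⊂ support w ∧ ∑ i, w' i • N i = ∑ i, w i • N i ∧
      ∑ i, w' i * o i ≤ ∑ i, w i * o i := by
  obtain ⟨d, hds, hd, hd0, hdo⟩ : ∃ d : I → ℝ, support d ⊆ support w ∧ ∑ i, d i • N i = 0 ∧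
      d ≠ 0 ∧ ∑ i, d i * o i ≤ 0 := by
    rw [linearIndepOn_iff_forall_support_subset] at hdep
    push Not at hdep
    obtain ⟨d, hds, hd, hd0⟩ := hdep
    rcases le_total (∑ i, d i * o i) 0 with hdo | hdo
    · exact ⟨d, hds, hd, hd0, hdo⟩
    · exact ⟨-d, by simpa [Function.support_neg] using hds, by simp [hd], neg_ne_zero.mpr hd0,
        by simpa using hdo⟩
  have hneg : ∃ i, d i < 0 :=
    exists_neg_of_sum_mul_eq_zero hd0 (fun i hi => he i (hds hi)) (by
      simpa using congrArg e hd)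
  obtain ⟨t, ht, hnonneg, i, hi, hwi⟩ := exists_pos_step_to_boundary hw hds hneg
  refine ⟨fun k => w k + t * d k, hnonneg, ?_, ?_, ?_⟩
  · refine (Set.ssubset_iff_of_subset fun k => ?_).mpr ⟨i, hds hi.ne, not_not.mpr hwi⟩
    refine mt fun hwk => ?_
    have hdk : d k = 0 := by_contra fun h => hds h hwk
    simp [hwk, hdk]
  · simp [add_smul, mul_smul, Finset.sum_add_distrib, ← Finset.smul_sum, hd]
  · simp only [add_mul, mul_assoc, Finset.sum_add_distrib, ← Finset.mul_sum]
    linarith [mul_nonpos_of_nonneg_of_nonpos ht.le hdo]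

theorem exists_nonneg_linearIndepOn_support {N : I → V} {e : V →ₗ[ℝ] ℝ} {w₀ : I → ℝ} (o : I → ℝ)
    (hw₀ : 0 ≤ w₀) (he : ∀ i ∈ support w₀, 0 < e (N i)) :
    ∃ w : I → ℝ, 0 ≤ w ∧ support w ⊆ support w₀ ∧ ∑ i, w i • N i = ∑ i, w₀ i • N i ∧
      ∑ i, w i * o i ≤ ∑ i, w₀ i * o i ∧ LinearIndepOn ℝ N (support w) := by
  induction hS : support w₀ using WellFoundedLT.induction generalizing w₀ with
  | ind S ih =>
    subst hS
    by_cases hind : LinearIndepOn ℝ N (support w₀)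
    · exact ⟨w₀, hw₀, subset_rfl, rfl, le_rfl, hind⟩
    obtain ⟨w₁, hw₁, hss, hN, ho⟩ := exists_nonneg_support_ssubset o hw₀ he hind
    obtain ⟨w, hw, hs, hN', ho', hind'⟩ := ih _ hss hw₁ (fun i hi => he i (hss.subset hi)) rfl
    exact ⟨w, hw, hs.trans hss.subset, hN'.trans hN, ho'.trans ho, hind'⟩

theorem exists_lagrange_multiplier {S : Set E} (hS : Convex ℝ S) (f g : E →ₗ[ℝ] ℝ) {m : ℝ}
    (hm : ∀ s ∈ S, g s = 0 → m ≤ f s) (hneg : ∃ s ∈ S, g s < 0) (hpos : ∃ s ∈ S, 0 < g s) :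
    ∃ j, ∀ s ∈ S, m + j * g s ≤ f s := by
  have hslope : ∀ s ∈ S, g s < 0 → ∀ t ∈ S, 0 < g t → (f s - m) / g s ≤ (f t - m) / g t := by
    intro s hs hgs t ht hgt
    have hden : 0 < g t - g s := by linarith
    have hmem := hS hs ht (div_nonneg hgt.le hden.le) (div_nonneg (neg_nonneg.mpr hgs.le) hden.le)
      (by rw [← add_div, ← sub_eq_add_neg, div_self hden.ne'])
    have hval := hm _ hmem (by simp; field_simp; ring)
    simp only [map_add, map_smul, smul_eq_mul, div_mul_eq_mul_div, ← add_div,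
      le_div_iff₀ hden] at hval
    rw [div_le_iff_of_neg hgs, div_mul_eq_mul_div, div_le_iff₀ hgt]
    linarith
  obtain ⟨t₀, ht₀, hgt₀⟩ := hpos
  obtain ⟨s₀, hs₀, hgs₀⟩ := hneg
  let slopes := {r | ∃ s ∈ S, g s < 0 ∧ (f s - m) / g s = r}
  have hbdd : BddAbove slopes := by
    refine ⟨(f t₀ - m) / g t₀, ?_⟩
    rintro _ ⟨s, hs, hgs, rfl⟩
    exact hslope s hs hgs t₀ ht₀ hgt₀
  refine ⟨sSup slopes, fun s hs => ?_⟩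
  rcases lt_trichotomy (g s) 0 with hgs | hgs | hgs
  · have := (div_le_iff_of_neg hgs).mp (le_csSup hbdd ⟨s, hs, hgs, rfl⟩)
    linarith
  · simpa [hgs] using hm s hs hgs
  · have : sSup slopes ≤ (f s - m) / g s := by
      refine csSup_le ⟨_, s₀, hs₀, hgs₀, rfl⟩ ?_
      rintro _ ⟨r, hr, hgr, rfl⟩
      exact hslope r hr hgr s hs hgs
    rw [le_div_iff₀ hgs] at this
    linarith

theorem exists_lagrange_multiplier_on_box (p z : I → ℝ) {t₁ t₂ m : ℝ} (ht₁ : t₁ < 0) (ht₂ : 0 < t₂)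
    (hm : ∀ r ∈ Set.pi Set.univ fun _ => Set.Icc t₁ t₂, z ⬝ᵥ r = 0 → m ≤ p ⬝ᵥ r) :
    ∃ j, ∀ r ∈ Set.pi Set.univ fun _ => Set.Icc t₁ t₂, m + j * z ⬝ᵥ r ≤ p ⬝ᵥ r := by
  by_cases hz : z = 0
  · exact ⟨0, fun r hr => by simpa using hm r hr (by simp [hz])⟩
  obtain ⟨i, hi⟩ := Function.ne_iff.mp hz
  have hsingle : ∀ c ∈ Set.Icc t₁ t₂, Pi.single i c ∈ Set.pi Set.univ fun _ => Set.Icc t₁ t₂ := by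
    intro c hc k _
    by_cases hk : k = i
    · subst hk; simpa using hc
    · simpa [hk] using ⟨ht₁.le, ht₂.le⟩
  have h₁ := hsingle t₁ ⟨le_rfl, (ht₁.trans ht₂).le⟩
  have h₂ := hsingle t₂ ⟨(ht₁.trans ht₂).le, le_rfl⟩
  refine exists_lagrange_multiplier (convex_pi fun _ _ => convex_Icc _ _) (dotProductBilin ℝ ℝ p)
    (dotProductBilin ℝ ℝ z) hm ?_ ?_ <;> rcases lt_or_gt_of_ne hi with hi | hi
  · exact ⟨_, h₂, by simpa using mul_neg_of_neg_of_pos hi ht₂⟩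
  · exact ⟨_, h₁, by simpa using mul_neg_of_pos_of_neg hi ht₁⟩
  · exact ⟨_, h₁, by simpa using mul_pos_of_neg_of_neg hi ht₁⟩
  · exact ⟨_, h₂, by simpa using mul_pos hi ht₂⟩

theorem exists_threshold_rule_on_box (p z : I → ℝ) {t₁ t₂ : ℝ} (ht₁ : t₁ < 0) (ht₂ : 0 < t₂) :
    ∃ (s : I → ℝ) (j : ℝ), (∀ i, s i ∈ Set.Icc t₁ t₂) ∧ z ⬝ᵥ s = 0 ∧
      (∀ i, 0 < p i - j * z i → s i = t₁) ∧ ∀ i, p i - j * z i < 0 → s i = t₂ := by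
  let box : Set (I → ℝ) := Set.pi Set.univ fun _ => Set.Icc t₁ t₂
  have hbox : IsCompact box := isCompact_univ_pi fun _ => isCompact_Icc
  obtain ⟨s, ⟨hs, hzs : z ⬝ᵥ s = 0⟩, hmin⟩ :=
    (hbox.inter_right (isClosed_eq (f := fun s => z ⬝ᵥ s) (g := fun _ => 0)
      (by fun_prop) (by fun_prop))).exists_isMinOn
      ⟨0, fun _ _ => ⟨ht₁.le, ht₂.le⟩, by simp⟩ (f := fun s => p ⬝ᵥ s)
      (by unfold dotProduct; fun_prop)
  obtain ⟨j, hj⟩ := exists_lagrange_multiplier_on_box p z ht₁ ht₂ fun r hr hzr => hmin ⟨hr, hzr⟩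
  have hcoord : ∀ i, ∀ c ∈ Set.Icc t₁ t₂, 0 ≤ (p i - j * z i) * (c - s i) := by
    intro i c hc
    have hmem : s + Pi.single i (c - s i) ∈ box := by
      intro k _
      by_cases hk : k = i
      · subst hk; simpa using hc
      · simpa [hk] using hs k (Set.mem_univ k)
    have := hj _ hmem
    simp only [dotProduct_add, dotProduct_single, hzs] at this
    linarith
  refine ⟨s, j, fun i => hs i (Set.mem_univ i), hzs, fun i hi => ?_, fun i hi => ?_⟩
  · have := hcoord i t₁ ⟨le_rfl, (ht₁.trans ht₂).le⟩
    exact le_antisymm (by nlinarith) (hs i (Set.mem_univ i)).1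
  · have := hcoord i t₂ ⟨(ht₁.trans ht₂).le, le_rfl⟩
    exact le_antisymm (hs i (Set.mem_univ i)).2 (by nlinarith)

theorem exists_kernel_generator_of_linearIndepOn_prod {α : I → V} {g : I → ℝ} {s : Set I}
    (hind : LinearIndepOn ℝ (fun i => (α i, g i)) s) :
    ∃ θ : I → ℝ, support θ ⊆ s ∧ ∑ i, θ i • α i = 0 ∧
      ∀ d : I → ℝ, support d ⊆ s → ∑ i, d i • α i = 0 → ∃ c : ℝ, d = c • θ := by
  rw [linearIndepOn_iff_forall_support_subset] at hind
  by_cases hker : ∀ d : I → ℝ, support d ⊆ s → ∑ i, d i • α i = 0 → d = 0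
  · exact ⟨0, by simp, by simp, fun d hds hd => ⟨0, by simp [hker d hds hd]⟩⟩
  push Not at hker
  obtain ⟨θ, hθs, hθ, hθ0⟩ := hker
  have hg : ∑ i, θ i * g i ≠ 0 := fun h =>
    hθ0 (hind θ hθs (by simp [Prod.ext_iff, Prod.fst_sum, Prod.snd_sum, hθ, h]))
  refine ⟨θ, hθs, hθ, fun d hds hd => ⟨(∑ i, d i * g i) / ∑ i, θ i * g i, sub_eq_zero.mp ?_⟩⟩
  refine hind _ (fun i hi => ?_) (Prod.ext ?_ ?_)
  · by_contra his
    have hdi : d i = 0 := by_contra fun h => his (hds h)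
    have hθi : θ i = 0 := by_contra fun h => his (hθs h)
    simp [hdi, hθi] at hi
  · simp [Prod.fst_sum, sub_smul, mul_smul, ← Finset.smul_sum, hd, hθ]
  · simp [Prod.snd_sum, sub_mul, mul_assoc, ← Finset.mul_sum, hg]

theorem exists_fin_reindex [Nonempty I] {w : I → ℝ} (hw : 0 ≤ w) {k : ℕ}
    (hk : (support w).ncard ≤ k) :
    ∃ (ω : Fin k → ℝ) (κ : Fin k → I), 0 ≤ ω ∧
      ∀ F : I → ℝ, ∑ c, ω c * F (κ c) = ∑ i, w i * F i := by
  obtain ⟨ι⟩ := Function.Embedding.nonempty_of_card_le (α := support w) (β := Fin k)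
    (by rwa [← Nat.card_eq_fintype_card, Fintype.card_fin, Nat.card_coe_set_eq])
  refine ⟨Function.extend ι (fun i => w i) 0, Function.extend ι Subtype.val
    fun _ => Classical.arbitrary I, fun c => ?_, fun F => ?_⟩
  · by_cases hc : ∃ i, ι i = c
    · obtain ⟨i, rfl⟩ := hc
      simpa [ι.injective.extend_apply] using hw i
    · simp [Function.extend_apply' _ _ _ hc]
  · rw [← Fintype.sum_of_injective ι ι.injective (fun i => w i * F i)
      (fun c => Function.extend ι (fun i => w i) 0 c *
        F (Function.extend ι Subtype.val (fun _ => Classical.arbitrary I) c))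
      (fun c hc => by simp [Function.extend_apply' _ _ _ hc])
      (fun i => by simp [ι.injective.extend_apply])]
    exact Fintype.sum_of_injective Subtype.val Subtype.val_injective _ _
      (fun i hi => by simp_all) (fun _ => rfl)

end LinearProgramming

section Mixing

open Function (support)
open Matrix

variable {A B X Y : Type*}

/-- The conditional cost of using the pair `i = (a, b)` of descriptions: the per-letter cost `ξ a y`
of the first description, weighted by the likelihood `β b y` of the second one. -/
def pairCost [Fintype Y] (β : B → Y → ℝ) (ξ : A → Y → ℝ) (i : A × B) : ℝ :=
  ∑ y, β i.2 y * ξ i.1 y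

/-- The product weight `u a * v b` with its first factor moved along the direction `θ` by an amount
`s b` that depends on the second index. -/
def tiltedWeight (u θ : A → ℝ) (v s : B → ℝ) (i : A × B) : ℝ :=
  (u i.1 + s i.2 * θ i.1) * v i.2

variable {α : A → X → ℝ} {β : B → Y → ℝ} {u θ : A → ℝ} {v s : B → ℝ} {e : Y → ℝ}
  {w : A × B → ℝ} {t₁ t₂ : ℝ}

theorem exists_column_sums_eq_add_mul [Fintype A] [Fintype B] (hu : ∀ x, ∑ a, u a * α a x = 1)
    (hspan : ∀ d : A → ℝ, support d ⊆ support u → ∑ a, d a • α a = 0 → ∃ c : ℝ, d = c • θ)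
    (hw : ∀ x y, ∑ i, w i * (α i.1 x * β i.2 y) = 1)
    (hsupp : ∀ i ∈ support w, i.1 ∈ support u) :
    ∃ e : Y → ℝ, ∀ a y, ∑ b, w (a, b) * β b y = u a + e y * θ a := by
  have hcolumn : ∀ y, ∃ c : ℝ, (fun a => ∑ b, w (a, b) * β b y - u a) = c • θ := by
    intro y
    refine hspan _ (fun a => mt fun ha => ?_) (funext fun x => ?_)
    · have hwa : ∀ b, w (a, b) = 0 := fun b => by_contra fun h => hsupp _ h ha
      simp [hwa, ha]
    · have := hw x y
      rw [Fintype.sum_prod_type] at this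
      simp only [Finset.sum_apply, Pi.smul_apply, smul_eq_mul, sub_mul, Finset.sum_sub_distrib,
        hu, Finset.sum_mul, Pi.zero_apply]
      rw [sub_eq_zero, ← this]
      exact Finset.sum_congr rfl fun a _ => Finset.sum_congr rfl fun b _ => by ring
  choose e he using hcolumn
  exact ⟨e, fun a y => by simpa [sub_eq_iff_eq_add'] using congrFun (he y) a⟩

theorem dotProduct_pairCost [Fintype A] [Fintype B] [Fintype Y]
    (hE : ∀ a y, ∑ b, w (a, b) * β b y = u a + e y * θ a) (ξ : A → Y → ℝ) :
    w ⬝ᵥ pairCost β ξ = ∑ a, u a * ∑ y, ξ a y + e ⬝ᵥ fun y => ∑ a, θ a * ξ a y := by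
  calc w ⬝ᵥ pairCost β ξ = ∑ a, ∑ y, (∑ b, w (a, b) * β b y) * ξ a y := by
        simp only [dotProduct, pairCost, Fintype.sum_prod_type, Finset.mul_sum, Finset.sum_mul,
          mul_assoc]
        exact Finset.sum_congr rfl fun a _ => Finset.sum_comm
    _ = _ := by
        simp only [hE, add_mul, Finset.sum_add_distrib, dotProduct, Finset.mul_sum, mul_assoc]
        rw [Finset.sum_comm (f := fun a y => e y * (θ a * ξ a y))]

theorem sum_tiltedWeight_mul_right [Fintype B] (hv : ∀ y, ∑ b, v b * β b y = 1) (a : A) (y : Y) :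
    ∑ b, tiltedWeight u θ v s (a, b) * β b y = u a + (∑ b, s b * (v b * β b y)) * θ a := by
  simp only [tiltedWeight, mul_assoc, add_mul, Finset.sum_add_distrib, ← Finset.mul_sum, hv,
    Finset.sum_mul, mul_one]
  exact congrArg _ (Finset.sum_congr rfl fun b _ => by ring)

theorem sum_tiltedWeight_mul_left [Fintype A] (hu : ∀ x, ∑ a, u a * α a x = 1)
    (hθ : ∑ a, θ a • α a = 0) (b : B) (x : X) :
    ∑ a, tiltedWeight u θ v s (a, b) * α a x = v b := by
  have hθx : ∑ a, θ a * α a x = 0 := by simpa using congrFun hθ x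
  calc ∑ a, tiltedWeight u θ v s (a, b) * α a x
      = v b * (∑ a, u a * α a x + s b * ∑ a, θ a * α a x) := by
        simp only [tiltedWeight, Finset.mul_sum, ← Finset.sum_add_distrib]
        exact Finset.sum_congr rfl fun a _ => by ring
    _ = v b := by rw [hu, hθx]; ring

theorem tiltedWeight_dotProduct_pairCost [Fintype A] [Fintype B] [Fintype Y]
    (hv : ∀ y, ∑ b, v b * β b y = 1) (ξ : A → Y → ℝ) :
    tiltedWeight u θ v s ⬝ᵥ pairCost β ξ =
      ∑ a, u a * ∑ y, ξ a y + (fun b => v b * β b ⬝ᵥ fun y => ∑ a, θ a * ξ a y) ⬝ᵥ s := by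
  rw [dotProduct_pairCost (sum_tiltedWeight_mul_right hv)]
  congr 1
  simp only [dotProduct, Finset.sum_mul (s := (Finset.univ : Finset B))]
  rw [Finset.sum_comm]
  refine Finset.sum_congr rfl fun b _ => ?_
  rw [Finset.mul_sum, Finset.sum_mul]
  exact Finset.sum_congr rfl fun y _ => by ring

theorem exists_extremal_steps [Finite A] (hu : 0 ≤ u) (hθu : support θ ⊆ support u)
    (hsign : θ ≠ 0 → (∃ a, θ a < 0) ∧ ∃ a, 0 < θ a) :
    ∃ t₁ < 0, ∃ t₂ > 0, (∀ t ∈ Set.Icc t₁ t₂, ∀ a, 0 ≤ u a + t * θ a) ∧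
      (θ ≠ 0 → (∃ a, 0 < θ a ∧ u a + t₁ * θ a = 0) ∧ ∃ a, θ a < 0 ∧ u a + t₂ * θ a = 0) := by
  by_cases hθ : θ = 0
  · exact ⟨-1, by norm_num, 1, by norm_num, fun t _ a => by simpa [hθ] using hu a,
      fun h => absurd hθ h⟩
  obtain ⟨hneg, hpos⟩ := hsign hθ
  obtain ⟨t₂, ht₂, hnonneg₂, hzero₂⟩ := exists_pos_step_to_boundary hu hθu hneg
  obtain ⟨t, ht, hnonneg, a, ha, hzero⟩ := exists_pos_step_to_boundary (d := -θ) hu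
    (by simpa using hθu) (by simpa using hpos)
  refine ⟨-t, neg_lt_zero.mpr ht, t₂, ht₂, fun r hr k => ?_, fun _ =>
    ⟨⟨a, by simpa using ha, by simpa using hzero⟩, hzero₂⟩⟩
  have h₁ : 0 ≤ u k + t * -θ k := hnonneg k
  have h₂ := hnonneg₂ k
  rcases le_total 0 (θ k) with hk | hk
  · linarith [mul_le_mul_of_nonneg_right hr.1 hk]
  · linarith [mul_le_mul_of_nonpos_right hr.2 hk]

theorem dotProduct_nonpos_of_threshold [Fintype B] [Fintype Y] {ζ : Y → ℝ} (hv : 0 ≤ v)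
    (ht₁ : t₁ < 0) (ht₂ : 0 < t₂)
    (hs₁ : ∀ b, 0 < v b * β b ⬝ᵥ ζ → s b = t₁) (hs₂ : ∀ b, v b * β b ⬝ᵥ ζ < 0 → s b = t₂)
    (ha₁ : ∃ a, 0 < θ a ∧ u a + t₁ * θ a = 0) (ha₂ : ∃ a, θ a < 0 ∧ u a + t₂ * θ a = 0)
    (hw : 0 ≤ w) (hsupp : support w ⊆ support (tiltedWeight u θ v s))
    (hE : ∀ a y, ∑ b, w (a, b) * β b y = u a + e y * θ a) :
    e ⬝ᵥ ζ ≤ 0 := by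
  have hrow : ∀ a, ∑ b, w (a, b) * (β b ⬝ᵥ ζ) = u a * ∑ y, ζ y + θ a * (e ⬝ᵥ ζ) := by
    intro a
    calc ∑ b, w (a, b) * (β b ⬝ᵥ ζ) = ∑ y, (∑ b, w (a, b) * β b y) * ζ y := by
          simp only [dotProduct, Finset.mul_sum, Finset.sum_mul, mul_assoc]
          exact Finset.sum_comm
      _ = _ := by
          simp only [hE, dotProduct, Finset.mul_sum, ← Finset.sum_add_distrib]
          exact Finset.sum_congr rfl fun y _ => by ring
  have hvpos : ∀ a b, w (a, b) ≠ 0 → 0 < v b ∧ u a + s b * θ a ≠ 0 := fun a b hab =>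
    have hne := hsupp hab
    ⟨(hv b).lt_of_ne (right_ne_zero_of_mul hne).symm, left_ne_zero_of_mul hne⟩
  obtain ⟨a₁, hθ₁, hu₁⟩ := ha₁
  obtain ⟨a₂, hθ₂, hu₂⟩ := ha₂
  have hle : ∑ b, w (a₁, b) * (β b ⬝ᵥ ζ) ≤ 0 := Finset.sum_nonpos fun b _ => by
    by_cases hab : w (a₁, b) = 0
    · simp [hab]
    · obtain ⟨hvb, hne⟩ := hvpos a₁ b hab
      refine mul_nonpos_of_nonneg_of_nonpos (hw _) (not_lt.mp fun h => hne ?_)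
      rw [hs₁ b (mul_pos hvb h), hu₁]
  have hge : 0 ≤ ∑ b, w (a₂, b) * (β b ⬝ᵥ ζ) := Finset.sum_nonneg fun b _ => by
    by_cases hab : w (a₂, b) = 0
    · simp [hab]
    · obtain ⟨hvb, hne⟩ := hvpos a₂ b hab
      refine mul_nonneg (hw _) (not_lt.mp fun h => hne ?_)
      rw [hs₂ b (mul_neg_of_pos_of_neg hvb h), hu₂]
  rw [hrow] at hle hge
  have h₁ : e ⬝ᵥ ζ ≤ t₁ * ∑ y, ζ y := by
    rw [eq_neg_of_add_eq_zero_left hu₁] at hle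
    exact le_of_mul_le_mul_left (by linarith) hθ₁
  have h₂ : e ⬝ᵥ ζ ≤ t₂ * ∑ y, ζ y := by
    rw [eq_neg_of_add_eq_zero_left hu₂] at hge
    exact le_of_mul_le_mul_left (by linarith) (neg_pos.mpr hθ₂)
  rcases le_total 0 (∑ y, ζ y) with hZ | hZ
  · exact h₁.trans (mul_nonpos_of_nonpos_of_nonneg ht₁.le hZ)
  · exact h₂.trans (mul_nonpos_of_nonneg_of_nonpos ht₂.le hZ)

theorem exists_sign_change_of_sum_smul_eq_zero [Fintype A] [Finite X] (hα : 0 ≤ α)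
    (hαθ : ∀ a ∈ support θ, α a ≠ 0) (hθ : ∑ a, θ a • α a = 0) (hθ0 : θ ≠ 0) :
    (∃ a, θ a < 0) ∧ ∃ a, 0 < θ a := by
  cases nonempty_fintype X
  have hpos : ∀ a ∈ support θ, 0 < ∑ x, α a x := fun a ha =>
    Fintype.sum_pos ((hα a).lt_of_ne (hαθ a ha).symm)
  have hsum : ∑ a, θ a * ∑ x, α a x = 0 := by
    simp_rw [Finset.mul_sum]
    rw [Finset.sum_comm]
    exact Finset.sum_eq_zero fun x _ => by simpa using congrFun hθ x
  refine ⟨exists_neg_of_sum_mul_eq_zero hθ0 hpos hsum, ?_⟩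
  simpa using exists_neg_of_sum_mul_eq_zero (d := -θ) (neg_ne_zero.mpr hθ0)
    (by simpa using hpos) (by simpa using hsum)

/-- Because the pairs `(α a, ∑ y, g a y)` are linearly independent, any `w` with the same marginal
differs from `u` only by multiples of a single direction `θ` in each column. Tilting the product
weight along `θ` by a threshold rule in a Lagrangian of `f` and `g` then bounds the `f`-cost on all
sub-supports at once, so that neither `f` nor a normalisation has to be a constraint later. -/
theorem exists_tiltedWeight_dominating [Fintype A] [Fintype B] [Finite X] [Fintype Y]
    (f g : A → Y → ℝ) (hα : 0 ≤ α) (hu0 : 0 ≤ u) (hv0 : 0 ≤ v) (hαu : ∀ a ∈ support u, α a ≠ 0)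
    (hu : ∀ x, ∑ a, u a * α a x = 1) (hv : ∀ y, ∑ b, v b * β b y = 1)
    (hind : LinearIndepOn ℝ (fun a => (α a, ∑ y, g a y)) (support u)) :
    ∃ (θ : A → ℝ) (s : B → ℝ), support θ ⊆ support u ∧ ∑ a, θ a • α a = 0 ∧
      0 ≤ tiltedWeight u θ v s ∧
      tiltedWeight u θ v s ⬝ᵥ pairCost β g = ∑ a, u a * ∑ y, g a y ∧
      ∀ w : A × B → ℝ, 0 ≤ w → support w ⊆ support (tiltedWeight u θ v s) →
        (∀ x y, ∑ i, w i * (α i.1 x * β i.2 y) = 1) →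
        w ⬝ᵥ pairCost β g = ∑ a, u a * ∑ y, g a y →
        w ⬝ᵥ pairCost β f ≤ ∑ a, u a * ∑ y, f a y := by
  obtain ⟨θ, hθu, hθ, hspan⟩ := exists_kernel_generator_of_linearIndepOn_prod hind
  obtain ⟨t₁, ht₁, t₂, ht₂, hnonneg, hextreme⟩ := exists_extremal_steps hu0 hθu
    (exists_sign_change_of_sum_smul_eq_zero hα (fun a ha => hαu a (hθu ha)) hθ)
  let ζ (ξ : A → Y → ℝ) (y : Y) : ℝ := ∑ a, θ a * ξ a y
  obtain ⟨s, j, hs, hgs, hs₁, hs₂⟩ := exists_threshold_rule_on_box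
    (fun b => v b * β b ⬝ᵥ ζ f) (fun b => v b * β b ⬝ᵥ ζ g) ht₁ ht₂
  refine ⟨θ, s, hθu, hθ, fun i => mul_nonneg (hnonneg _ (hs _) _) (hv0 _), ?_,
    fun w hw hsupp hmarg hgw => ?_⟩
  · rw [tiltedWeight_dotProduct_pairCost hv, hgs, add_zero]
  obtain ⟨e, hE⟩ := exists_column_sums_eq_add_mul hu hspan hmarg
    (fun i hi ha => hsupp hi (by
      have hθa : θ i.1 = 0 := by_contra fun h => hθu h ha
      simp [tiltedWeight, ha, hθa]))
  have heg : e ⬝ᵥ ζ g = 0 := by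
    simpa [hgw] using dotProduct_pairCost hE g
  have hef : e ⬝ᵥ (ζ f - j • ζ g) ≤ 0 := by
    by_cases hθ0 : θ = 0
    · simp [ζ, hθ0, dotProduct]
    obtain ⟨ha₁, ha₂⟩ := hextreme hθ0
    have hsplit : ∀ b, v b * β b ⬝ᵥ (ζ f - j • ζ g) =
        v b * β b ⬝ᵥ ζ f - j * (v b * β b ⬝ᵥ ζ g) := fun b => by
      rw [dotProduct_sub, dotProduct_smul, smul_eq_mul]; ring
    exact dotProduct_nonpos_of_threshold hv0 ht₁ ht₂ (fun b hb => hs₁ b (by rwa [← hsplit]))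
      (fun b hb => hs₂ b (by rwa [← hsplit])) ha₁ ha₂ hw hsupp hE
  rw [dotProduct_sub, dotProduct_smul, heg, smul_zero, sub_zero] at hef
  rw [dotProduct_pairCost hE f]
  exact add_le_of_nonpos_right hef

end Mixing

section SupportReduction

open Function (support)
open Matrix

variable {A B X Y : Type*} [Fintype A] [Fintype B]
  {α : A → X → ℝ} {β : B → Y → ℝ}

theorem sum_indicator_support_smul {V : Type*} [AddCommGroup V] [Module ℝ V] (α : A → X → ℝ)
    {F : A → V} (hF : ∀ a, α a = 0 → F a = 0) :
    ∑ a, (support α).indicator (1 : A → ℝ) a • F a = ∑ a, F a := by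
  refine Finset.sum_congr rfl fun a _ => ?_
  by_cases ha : α a = 0
  · rw [hF a ha, smul_zero]
  · rw [Set.indicator_of_mem ha, Pi.one_apply, one_smul]

theorem exists_basic_weights [Finite X] (hα : 0 ≤ α) (hα1 : ∀ x, ∑ a, α a x = 1) {f g : A → ℝ}
    (hf : ∀ a, α a = 0 → f a = 0) (hg : ∀ a, α a = 0 → g a = 0) :
    ∃ u : A → ℝ, 0 ≤ u ∧ (∀ a ∈ support u, α a ≠ 0) ∧ (∀ x, ∑ a, u a * α a x = 1) ∧
      ∑ a, u a * f a ≤ ∑ a, f a ∧ ∑ a, u a * g a = ∑ a, g a ∧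
      LinearIndepOn ℝ (fun a => (α a, g a)) (support u) := by
  cases nonempty_fintype X
  let e : (X → ℝ) × ℝ →ₗ[ℝ] ℝ := (∑ x, LinearMap.proj x) ∘ₗ LinearMap.fst ℝ _ _
  obtain ⟨u, hu, husupp, hN, hfu, hind⟩ := exists_nonneg_linearIndepOn_support
    (N := fun a => (α a, g a)) (e := e) (w₀ := (support α).indicator 1) f
    (fun a => Set.indicator_nonneg (fun _ _ => zero_le_one) a) (fun a ha => by
      have hαa : α a ≠ 0 := Set.mem_of_indicator_ne_zero ha
      simpa [e] using Fintype.sum_pos ((hα a).lt_of_ne hαa.symm))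
  rw [sum_indicator_support_smul α fun a ha => by simp [ha, hg a ha]] at hN
  refine ⟨u, hu, fun a ha => Set.mem_of_indicator_ne_zero (husupp ha), fun x => ?_, ?_, ?_, hind⟩
  · simpa [Prod.fst_sum, hα1] using congrFun (congrArg Prod.fst hN) x
  · exact hfu.trans_eq (sum_indicator_support_smul α hf)
  · simpa [Prod.snd_sum] using congrArg Prod.snd hN

theorem exists_small_support [Fintype X] [Fintype Y] (hα : 0 ≤ α) (hβ : 0 ≤ β)
    {w₀ : A × B → ℝ} (hw₀ : 0 ≤ w₀) (hsupp : ∀ i ∈ support w₀, α i.1 ≠ 0 ∧ β i.2 ≠ 0)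
    (g₁ g₂ f : A × B → ℝ) :
    ∃ w : A × B → ℝ, 0 ≤ w ∧ support w ⊆ support w₀ ∧
      (support w).ncard ≤ Fintype.card X * Fintype.card Y + 2 ∧
      (∀ x y, ∑ i, w i * (α i.1 x * β i.2 y) = ∑ i, w₀ i * (α i.1 x * β i.2 y)) ∧
      w ⬝ᵥ g₁ = w₀ ⬝ᵥ g₁ ∧ w ⬝ᵥ g₂ = w₀ ⬝ᵥ g₂ ∧ w ⬝ᵥ f ≤ w₀ ⬝ᵥ f := by
  let N : A × B → (X × Y → ℝ) × ℝ × ℝ := fun i => (fun t => α i.1 t.1 * β i.2 t.2, g₁ i, g₂ i)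
  let e : (X × Y → ℝ) × ℝ × ℝ →ₗ[ℝ] ℝ := (∑ t, LinearMap.proj t) ∘ₗ LinearMap.fst ℝ _ _
  obtain ⟨w, hw, hww₀, hN, hf, hind⟩ := exists_nonneg_linearIndepOn_support (N := N) (e := e)
    f hw₀ (fun i hi => by
      have hα' : 0 < ∑ x, α i.1 x := Fintype.sum_pos ((hα i.1).lt_of_ne (hsupp i hi).1.symm)
      have hβ' : 0 < ∑ y, β i.2 y := Fintype.sum_pos ((hβ i.2).lt_of_ne (hsupp i hi).2.symm)
      simpa [N, e, Fintype.sum_prod_type, ← Finset.sum_mul_sum] using mul_pos hα' hβ')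
  refine ⟨w, hw, hww₀, ?_, fun x y => ?_, ?_, ?_, hf⟩
  · rw [← Nat.card_coe_set_eq, Nat.card_eq_fintype_card]
    simpa using LinearIndependent.fintype_card_le_finrank hind
  · simpa [N, Prod.fst_sum] using congrFun (congrArg Prod.fst hN) (x, y)
  · simpa [N, Prod.fst_sum, Prod.snd_sum, dotProduct] using congrArg (fun t => t.2.1) hN
  · simpa [N, Prod.snd_sum, dotProduct] using congrArg (fun t => t.2.2) hN

theorem dotProduct_pairCost_swap [Fintype X] {w : A × B → ℝ} {v : B → ℝ}
    (hw : ∀ b x, ∑ a, w (a, b) * α a x = v b) (ξ : B → X → ℝ) :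
    w ⬝ᵥ (fun i => pairCost α ξ i.swap) = ∑ b, v b * ∑ x, ξ b x := by
  simp only [dotProduct, pairCost, Prod.swap, Fintype.sum_prod_type_right, Finset.mul_sum]
  refine Finset.sum_congr rfl fun b _ => ?_
  rw [Finset.sum_comm]
  exact Finset.sum_congr rfl fun x _ => by simp only [← hw b x, Finset.sum_mul, mul_assoc]

theorem exists_fin_description_pairs [Fintype X] [Fintype Y] [Nonempty A] [Nonempty B]
    (hα : 0 ≤ α) (hβ : 0 ≤ β)
    (hα1 : ∀ x, ∑ a, α a x = 1) (hβ1 : ∀ y, ∑ b, β b y = 1) {f₁ g₁ : A → Y → ℝ}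
    {f₂ g₂ : B → X → ℝ} (hf₁ : ∀ a, α a = 0 → f₁ a = 0) (hg₁ : ∀ a, α a = 0 → g₁ a = 0)
    (hf₂ : ∀ b, β b = 0 → f₂ b = 0) (hg₂ : ∀ b, β b = 0 → g₂ b = 0) :
    ∃ (ω : Fin (Fintype.card X * Fintype.card Y + 2) → ℝ)
      (κ : Fin (Fintype.card X * Fintype.card Y + 2) → A × B),
      0 ≤ ω ∧ (∀ x y, ∑ c, ω c * (α (κ c).1 x * β (κ c).2 y) = 1) ∧
      ∑ c, ω c * pairCost β f₁ (κ c) ≤ ∑ a, ∑ y, f₁ a y ∧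
      ∑ c, ω c * pairCost β g₁ (κ c) = ∑ a, ∑ y, g₁ a y ∧
      ∑ c, ω c * pairCost α f₂ (κ c).swap ≤ ∑ b, ∑ x, f₂ b x ∧
      ∑ c, ω c * pairCost α g₂ (κ c).swap = ∑ b, ∑ x, g₂ b x := by
  obtain ⟨u, hu0, hαu, hu, hfu, hgu, hind⟩ := exists_basic_weights hα hα1
    (f := fun a => ∑ y, f₁ a y) (g := fun a => ∑ y, g₁ a y)
    (fun a ha => by simp [hf₁ a ha]) (fun a ha => by simp [hg₁ a ha])
  let v : B → ℝ := (support β).indicator 1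
  have hsum_v : ∀ {F : B → ℝ}, (∀ b, β b = 0 → F b = 0) → ∑ b, v b * F b = ∑ b, F b :=
    fun hF => sum_indicator_support_smul β hF
  have hv : ∀ y, ∑ b, v b * β b y = 1 := fun y => by
    rw [hsum_v (F := fun b => β b y) fun b hb => by simp [hb], hβ1]
  obtain ⟨θ, s, hθu, hθ, hw₀, hgw₀, hdom⟩ := exists_tiltedWeight_dominating f₁ g₁ hα hu0
    (v := v) (fun b => Set.indicator_nonneg (fun _ _ => zero_le_one) b) hαu hu hv hind
  set w₀ := tiltedWeight u θ v s
  have hcol : ∀ b x, ∑ a, w₀ (a, b) * α a x = v b := sum_tiltedWeight_mul_left hu hθ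
  have hmarg₀ : ∀ x y, ∑ i, w₀ i * (α i.1 x * β i.2 y) = 1 := fun x y => by
    rw [← hv y, Fintype.sum_prod_type_right]
    exact Finset.sum_congr rfl fun b _ => by simp [← hcol b x, Finset.sum_mul, mul_assoc]
  have hsupp₀ : ∀ i ∈ support w₀, α i.1 ≠ 0 ∧ β i.2 ≠ 0 := fun i hi => by
    refine ⟨hαu _ fun hui => left_ne_zero_of_mul hi ?_,
      Set.mem_of_indicator_ne_zero (right_ne_zero_of_mul hi)⟩
    have hθi : θ i.1 = 0 := by_contra fun h => hθu h hui
    simp [hui, hθi]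
  obtain ⟨w, hw, hww₀, hcard, hmarg, hgw, hg₂w, hf₂w⟩ := exists_small_support hα hβ hw₀ hsupp₀
    (pairCost β g₁) (fun i => pairCost α g₂ i.swap) (fun i => pairCost α f₂ i.swap)
  have hf₁w := (hdom w hw hww₀ (fun x y => (hmarg x y).trans (hmarg₀ x y)) (hgw.trans hgw₀)).trans
    hfu
  rw [dotProduct_pairCost_swap hcol, hsum_v fun b hb => by simp [hf₂ b hb]] at hf₂w
  rw [dotProduct_pairCost_swap hcol, hsum_v fun b hb => by simp [hg₂ b hb]] at hg₂w
  obtain ⟨ω, κ, hω, hsum⟩ := exists_fin_reindex hw hcard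
  exact ⟨ω, κ, hω, fun x y => (hsum fun i => α i.1 x * β i.2 y).trans
    ((hmarg x y).trans (hmarg₀ x y)), (hsum _).trans_le hf₁w,
    (hsum _).trans (hgw.trans (hgw₀.trans hgu)), (hsum fun i => pairCost α f₂ i.swap).trans_le hf₂w,
    (hsum fun i => pairCost α g₂ i.swap).trans hg₂w⟩

end SupportReduction

section InformationMeasures

theorem sub_div_log_two_le_mul_logb_sub {p q : ℝ} (hp : 0 ≤ p) (hq : 0 ≤ q) (hpq : p ≠ 0 → q ≠ 0) :
    (p - q) / Real.log 2 ≤ p * (Real.logb 2 p - Real.logb 2 q) := by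
  have hlog : 0 < Real.log 2 := Real.log_pos one_lt_two
  rcases hp.eq_or_lt with rfl | hp
  · simpa [neg_div] using div_nonneg hq hlog.le
  have hq : 0 < q := hq.lt_of_ne (hpq hp.ne').symm
  have h := mul_le_mul_of_nonneg_left (Real.log_le_sub_one_of_pos (div_pos hq hp)) hp.le
  rw [Real.log_div hq.ne' hp.ne', mul_sub_one, mul_div_cancel₀ _ hp.ne'] at h
  rw [Real.logb, Real.logb, ← sub_div, ← mul_div_assoc]
  gcongr
  linarith

theorem sum_mul_logb_sub_nonneg {ι : Type*} [Fintype ι] {P Q : ι → ℝ} (hP : 0 ≤ P) (hQ : 0 ≤ Q)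
    (hPQ : ∀ i, P i ≠ 0 → Q i ≠ 0) (hle : ∑ i, Q i ≤ ∑ i, P i) :
    0 ≤ ∑ i, P i * (Real.logb 2 (P i) - Real.logb 2 (Q i)) :=
  calc 0 ≤ (∑ i, P i - ∑ i, Q i) / Real.log 2 :=
        div_nonneg (sub_nonneg.2 hle) (Real.log_pos one_lt_two).le
    _ = ∑ i, (P i - Q i) / Real.log 2 := by rw [← Finset.sum_sub_distrib, Finset.sum_div]
    _ ≤ _ := Finset.sum_le_sum fun i _ => sub_div_log_two_le_mul_logb_sub (hP i) (hQ i) (hPQ i)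

/-- The negative entropy of a nonnegative vector, made homogeneous of degree one: it equals
`-s • H(v / s)` for `s = ∑ x, v x`. -/
def negEntropy {X : Type*} [Fintype X] (v : X → ℝ) : ℝ :=
  ∑ x, v x * Real.logb 2 (v x) - (∑ x, v x) * Real.logb 2 (∑ x, v x)

theorem mul_mul_logb_mul (c v : ℝ) :
    c * v * Real.logb 2 (c * v) = c * v * Real.logb 2 c + c * (v * Real.logb 2 v) := by
  rcases eq_or_ne c 0 with rfl | hc
  · simp
  rcases eq_or_ne v 0 with rfl | hv
  · simp
  rw [Real.logb_mul hc hv]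
  ring

theorem negEntropy_const_mul {X : Type*} [Fintype X] (c : ℝ) (v : X → ℝ) :
    negEntropy (fun x => c * v x) = c * negEntropy v := by
  unfold negEntropy
  rw [← Finset.mul_sum, mul_mul_logb_mul]
  simp only [mul_mul_logb_mul, Finset.sum_add_distrib, ← Finset.mul_sum, ← Finset.sum_mul]
  ring

theorem marginals_pos_of_ne_zero {X Y C : Type*} [Fintype X] [Fintype C] {p : X × Y × C → ℝ}
    (hp : 0 ≤ p) {t : X × Y × C} (ht : p t ≠ 0) :
    0 < ∑ c, p (t.1, t.2.1, c) ∧ 0 < ∑ x, p (x, t.2) ∧ 0 < ∑ x, ∑ c, p (x, t.2.1, c) := by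
  have hpt : 0 < p t := (hp t).lt_of_ne ht.symm
  have hXY : 0 < ∑ c, p (t.1, t.2.1, c) := hpt.trans_le
    (Finset.single_le_sum (f := fun c => p (t.1, t.2.1, c)) (fun _ _ => hp _) (Finset.mem_univ _))
  exact ⟨hXY, hpt.trans_le
    (Finset.single_le_sum (f := fun x => p (x, t.2)) (fun _ _ => hp _) (Finset.mem_univ _)),
    hXY.trans_le (Finset.single_le_sum (f := fun x => ∑ c, p (x, t.2.1, c))
      (fun _ _ => Finset.sum_nonneg fun _ _ => hp _) (Finset.mem_univ _))⟩

variable {X Y C : Type} [Fintype X] [Fintype Y] [Fintype C]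

theorem condMI_eq_condH_add_sum_negEntropy {q : X × Y → ℝ} {p : X × Y × C → ℝ}
    (hp : ∀ x y, ∑ c, p (x, y, c) = q (x, y)) :
    condMI p = condH q + ∑ c, ∑ y, negEntropy (fun x => p (x, y, c)) := by
  have hXY : (fun ab : X × Y => ∑ c, p (ab.1, ab.2, c)) = q := funext fun ab => hp _ _
  have hneg : ∑ c, ∑ y, negEntropy (fun x => p (x, y, c)) =
      H2 (fun bc : Y × C => ∑ a, p (a, bc.1, bc.2)) - H2 p := by
    have hcomm : ∑ y, ∑ c, ∑ x, p (x, y, c) * Real.logb 2 (p (x, y, c)) =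
        ∑ x, ∑ y, ∑ c, p (x, y, c) * Real.logb 2 (p (x, y, c)) := by
      rw [Finset.sum_comm (s := (Finset.univ : Finset X))]
      exact Finset.sum_congr rfl fun y _ => Finset.sum_comm
    rw [Finset.sum_comm]
    simp only [H2, negEntropy, Finset.sum_sub_distrib, Fintype.sum_prod_type, hcomm]
    ring
  rw [condMI, condH, hneg, hXY]
  simp only [hp]
  ring

theorem condMI_eq_sum_mul_logb (p : X × Y × C → ℝ) :
    condMI p = ∑ t, p t *
      (Real.logb 2 (p t) + Real.logb 2 (∑ x, ∑ c, p (x, t.2.1, c)) -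
        Real.logb 2 (∑ c, p (t.1, t.2.1, c)) - Real.logb 2 (∑ x, p (x, t.2))) := by
  have hY : ∑ y, ∑ x, ∑ c, p (x, y, c) * Real.logb 2 (∑ x, ∑ c, p (x, y, c)) =
      ∑ x, ∑ y, ∑ c, p (x, y, c) * Real.logb 2 (∑ x, ∑ c, p (x, y, c)) := Finset.sum_comm
  have hYC : ∑ y, ∑ c, ∑ x, p (x, y, c) * Real.logb 2 (∑ x, p (x, y, c)) =
      ∑ x, ∑ y, ∑ c, p (x, y, c) * Real.logb 2 (∑ x, p (x, y, c)) := by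
    rw [Finset.sum_comm (s := (Finset.univ : Finset X))]
    exact Finset.sum_congr rfl fun y _ => Finset.sum_comm
  simp only [condMI, H2, Fintype.sum_prod_type, mul_sub, mul_add, Finset.sum_sub_distrib,
    Finset.sum_add_distrib, Finset.sum_mul, hY, hYC]
  ring

theorem condMI_nonneg {p : X × Y × C → ℝ} (hp : 0 ≤ p) : 0 ≤ condMI p := by
  -- Compare `p` with the law `p(x,y) p(y,c) / p(y)` of the Markov chain with the same marginals.
  have hgibbs := sum_mul_logb_sub_nonneg (P := p)
    (Q := fun t => (∑ c, p (t.1, t.2.1, c)) * (∑ x, p (x, t.2)) / ∑ x, ∑ c, p (x, t.2.1, c)) hp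
    (fun t => div_nonneg (mul_nonneg (Finset.sum_nonneg fun _ _ => hp _)
      (Finset.sum_nonneg fun _ _ => hp _))
      (Finset.sum_nonneg fun _ _ => Finset.sum_nonneg fun _ _ => hp _))
    (fun t ht => by
      obtain ⟨hXY, hYC, hY⟩ := marginals_pos_of_ne_zero hp ht
      positivity)
    (le_of_eq (by
      simp only [Fintype.sum_prod_type]
      rw [Finset.sum_comm, Finset.sum_comm (s := (Finset.univ : Finset X))]
      refine Finset.sum_congr rfl fun y _ => ?_
      simp only [← Finset.sum_div, ← Finset.mul_sum, ← Finset.sum_mul]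
      rw [Finset.sum_comm (s := (Finset.univ : Finset C)), mul_self_div_self]))
  refine hgibbs.trans_eq ((condMI_eq_sum_mul_logb p).trans
    (Finset.sum_congr rfl fun t _ => ?_)).symm
  by_cases ht : p t = 0
  · simp [ht]
  obtain ⟨hXY, hYC, hY⟩ := marginals_pos_of_ne_zero hp ht
  rw [Real.logb_div (mul_pos hXY hYC).ne' hY.ne', Real.logb_mul hXY.ne' hYC.ne']
  ring

end InformationMeasures

section WynerZiv

/-- The rates over which `R_U*(d1,d2)` is the infimum. -/
def oneDescRates {𝒳 𝒴 Xh Yh : Type} [Fintype 𝒳] [Fintype 𝒴] (q : 𝒳 × 𝒴 → ℝ)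
    (δ1 : 𝒳 → Xh → ℝ) (δ2 : 𝒴 → Yh → ℝ) (d1 d2 : ℝ) : Set ℝ :=
  {r : ℝ | ∃ W : 𝒳 × 𝒴 → Fin (Fintype.card 𝒳 * Fintype.card 𝒴 + 2) → ℝ,
    IsCondPmf W ∧
    (∃ π1 : Fin (Fintype.card 𝒳 * Fintype.card 𝒴 + 2) × 𝒴 → Xh,
      (∑ x, ∑ y, ∑ c, q (x, y) * W (x, y) c * δ1 x (π1 (c, y))) ≤ d1) ∧
    (∃ π2 : Fin (Fintype.card 𝒳 * Fintype.card 𝒴 + 2) × 𝒳 → Yh,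
      (∑ x, ∑ y, ∑ c, q (x, y) * W (x, y) c * δ2 y (π2 (c, x))) ≤ d2) ∧
    r = max
      (condMI (fun t : 𝒳 × 𝒴 × Fin (Fintype.card 𝒳 * Fintype.card 𝒴 + 2) =>
        q (t.1, t.2.1) * W (t.1, t.2.1) t.2.2))
      (condMI (fun t : 𝒴 × 𝒳 × Fin (Fintype.card 𝒳 * Fintype.card 𝒴 + 2) =>
        q (t.2.1, t.1) * W (t.2.1, t.1) t.2.2))}

/-- The rates over which the Wyner–Ziv function `R^{WZ}_{X|Y}(d)` is the infimum. -/
def wzRates {X Y Xh : Type} [Fintype X] [Fintype Y] (q : X × Y → ℝ) (δ : X → Xh → ℝ) (d : ℝ) :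
    Set ℝ :=
  {r : ℝ | ∃ p : Fin (Fintype.card X + 1) × X × Y → ℝ, IsPmf p ∧
    (∀ x y, (∑ a, p (a, x, y)) = q (x, y)) ∧ Markov p ∧
    (∃ π1 : Fin (Fintype.card X + 1) × Y → Xh,
      (∑ a, ∑ x, ∑ y, p (a, x, y) * δ x (π1 (a, y))) ≤ d) ∧
    r = condMI (fun t : X × Y × Fin (Fintype.card X + 1) => p (t.2.2, t.1, t.2.1))}

theorem IsPmf.nonempty {α : Type} [Fintype α] {p : α → ℝ} (hp : IsPmf p) : Nonempty α := by
  by_contra h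
  rw [not_nonempty_iff] at h
  simpa using hp.2

variable {A X Y Xh : Type} [Fintype X]

theorem IsPmf.swap [Fintype Y] {q : X × Y → ℝ} (hq : IsPmf q) : IsPmf (swap q) :=
  ⟨fun _ => hq.1 _, ((Equiv.prodComm Y X).sum_comp q).trans hq.2⟩

theorem exists_kernel_of_markov [Fintype A] [Fintype Y] [Nonempty A] {q : X × Y → ℝ}
    {p : A × X × Y → ℝ} (hp : 0 ≤ p) (hpq : ∀ x y, ∑ a, p (a, x, y) = q (x, y)) (hM : Markov p) :
    ∃ α : A → X → ℝ, 0 ≤ α ∧ (∀ x, ∑ a, α a x = 1) ∧ ∀ a x y, p (a, x, y) = q (x, y) * α a x := by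
  have hq : 0 ≤ q := fun t => (Finset.sum_nonneg fun a _ => hp (a, t)).trans_eq (hpq t.1 t.2)
  have hX : ∀ x, ∑ a, ∑ y, p (a, x, y) = ∑ y, q (x, y) := fun x => by
    rw [Finset.sum_comm]
    simp only [hpq]
  refine ⟨fun a x => if ∑ y, q (x, y) = 0 then
    (Pi.single (Classical.arbitrary A) 1 : A → ℝ) a
    else (∑ y, p (a, x, y)) / ∑ y, q (x, y), fun a x => ?_, fun x => ?_, fun a x y => ?_⟩
  · dsimp only
    split_ifs
    · exact (Pi.single_nonneg.2 zero_le_one : (0 : A → ℝ) ≤ Pi.single _ 1) a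
    · exact div_nonneg (Finset.sum_nonneg fun _ _ => hp _) (Finset.sum_nonneg fun _ _ => hq _)
  · dsimp only
    split_ifs with h
    · simp
    · rw [← Finset.sum_div, hX, div_self h]
  · dsimp only
    split_ifs with h
    · have hqxy : q (x, y) = 0 :=
        (Finset.sum_eq_zero_iff_of_nonneg fun y _ => hq (x, y)).1 h y (Finset.mem_univ _)
      rw [hqxy, zero_mul]
      exact (Finset.sum_eq_zero_iff_of_nonneg fun a _ => hp (a, x, y)).1 ((hpq x y).trans hqxy) a
        (Finset.mem_univ _)
    · have hMaxy := hM a x y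
      rw [hX, hpq] at hMaxy
      rw [mul_div_assoc', eq_div_iff h, hMaxy, mul_comm]

/-- `P(Y = y, A = a) • H(X | Y = y, A = a)`, negated, for the auxiliary `A` generated from `X` by
the kernel `α`. -/
def sliceNegEntropy (q : X × Y → ℝ) (α : A → X → ℝ) (a : A) (y : Y) : ℝ :=
  negEntropy fun x => q (x, y) * α a x

/-- The part of the expected distortion incurred when `A = a` and `Y = y`, for the auxiliary `A`
generated from `X` by the kernel `α` and the reconstruction `π`. -/
def sliceDistortion (q : X × Y → ℝ) (α : A → X → ℝ) (δ : X → Xh → ℝ) (π : A × Y → Xh)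
    (a : A) (y : Y) : ℝ :=
  ∑ x, q (x, y) * α a x * δ x (π (a, y))

theorem sliceNegEntropy_eq_zero {q : X × Y → ℝ} {α : A → X → ℝ} {a : A}
    (ha : α a = 0) : sliceNegEntropy q α a = 0 :=
  funext fun y => by simp [sliceNegEntropy, negEntropy, ha]

theorem sliceDistortion_eq_zero {q : X × Y → ℝ} {α : A → X → ℝ} {δ : X → Xh → ℝ}
    {π : A × Y → Xh} {a : A} (ha : α a = 0) : sliceDistortion q α δ π a = 0 :=
  funext fun y => by simp [sliceDistortion, ha]

theorem exists_kernel_of_mem_wzRates [Fintype Y] {q : X × Y → ℝ} {δ : X → Xh → ℝ} {d r : ℝ}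
    (hr : r ∈ wzRates q δ d) :
    ∃ (α : Fin (Fintype.card X + 1) → X → ℝ) (π : Fin (Fintype.card X + 1) × Y → Xh),
      0 ≤ α ∧ (∀ x, ∑ a, α a x = 1) ∧ ∑ a, ∑ y, sliceDistortion q α δ π a y ≤ d ∧
      r = condH q + ∑ a, ∑ y, sliceNegEntropy q α a y := by
  obtain ⟨p, hp, hpq, hM, ⟨π, hπ⟩, rfl⟩ := hr
  obtain ⟨α, hα, hα1, hpα⟩ := exists_kernel_of_markov hp.1 hpq hM
  refine ⟨α, π, hα, hα1, hπ.trans_eq' ?_, ?_⟩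
  · refine Finset.sum_congr rfl fun a _ => ?_
    rw [Finset.sum_comm]
    simp only [sliceDistortion, hpα]
  · rw [condMI_eq_condH_add_sum_negEntropy hpq]
    simp only [sliceNegEntropy, hpα]

theorem wzRates_nonempty [Fintype Y] {q : X × Y → ℝ} (hq : IsPmf q) {δ : X → Xh → ℝ} {d : ℝ}
    (hδ : ∃ g : X → Xh, ∑ t, q t * δ t.1 (g t.1) ≤ d) : (wzRates q δ d).Nonempty := by
  obtain ⟨g, hg⟩ := hδ
  have hXh : Nonempty Xh := hq.nonempty.map fun t => g t.1
  -- The auxiliary is a copy of `X` inside the larger alphabet.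
  let ι : X → Fin (Fintype.card X + 1) := fun x => (Fintype.equivFin X x).castSucc
  have hι : Function.Injective ι :=
    (Fin.castSucc_injective _).comp (Fintype.equivFin X).injective
  let p : Fin (Fintype.card X + 1) × X × Y → ℝ := fun t => if t.1 = ι t.2.1 then q t.2 else 0
  have hpq : ∀ x y, ∑ a, p (a, x, y) = q (x, y) := fun x y => by simp [p]
  have hp : ∀ t, 0 ≤ p t := fun t => ite_nonneg (hq.1 _) le_rfl
  refine ⟨_, p, ⟨hp, ?_⟩, hpq, fun a x y => ?_,
    ⟨fun t => Function.extend ι g (fun _ => Classical.arbitrary Xh) t.1, ?_⟩, rfl⟩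
  · rw [Fintype.sum_prod_type, Finset.sum_comm, ← hq.2]
    exact Finset.sum_congr rfl fun t _ => hpq t.1 t.2
  · rw [hpq, Finset.sum_comm]
    simp only [hpq]
    by_cases h : a = ι x <;> simp [p, h, mul_comm]
  · rw [Finset.sum_comm]
    refine hg.trans_eq' ?_
    rw [Fintype.sum_prod_type]
    refine Finset.sum_congr rfl fun x _ => ?_
    rw [Finset.sum_comm]
    exact Finset.sum_congr rfl fun y _ => by simp [p, hι.extend_apply]

end WynerZiv

section ProductDescription

variable {A B C X Y Xh Yh : Type}

/-- The channel `p(c | x, y)` of a description `c` that reveals the pair `κ c = (a, b)` of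
Wyner–Ziv descriptions, with weight `ω c`; for `κ = id` and `ω = 1` the pair is exactly the two
independently generated descriptions. -/
def pairChannel (ω : C → ℝ) (κ : C → A × B) (α : A → X → ℝ) (β : B → Y → ℝ) (t : X × Y)
    (c : C) : ℝ :=
  ω c * (α (κ c).1 t.1 * β (κ c).2 t.2)

theorem pairChannel_swap (ω : C → ℝ) (κ : C → A × B) (α : A → X → ℝ) (β : B → Y → ℝ) (t : X × Y) :
    pairChannel ω (fun c => (κ c).swap) β α t.swap = pairChannel ω κ α β t :=
  funext fun c => by simp [pairChannel, mul_comm]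

theorem condMI_pairChannel [Fintype C] [Fintype X] [Fintype Y] {q : X × Y → ℝ} {ω : C → ℝ}
    {κ : C → A × B} {α : A → X → ℝ} {β : B → Y → ℝ}
    (hW : ∀ x y, ∑ c, pairChannel ω κ α β (x, y) c = 1) :
    condMI (fun t : X × Y × C => q (t.1, t.2.1) * pairChannel ω κ α β (t.1, t.2.1) t.2.2) =
      condH q + ∑ c, ω c * pairCost β (sliceNegEntropy q α) (κ c) := by
  rw [condMI_eq_condH_add_sum_negEntropy (q := q) fun x y => by
    simp only [← Finset.mul_sum, hW, mul_one]]
  congr 1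
  refine Finset.sum_congr rfl fun c _ => ?_
  rw [pairCost, Finset.mul_sum]
  refine Finset.sum_congr rfl fun y _ => ?_
  rw [← mul_assoc, sliceNegEntropy, ← negEntropy_const_mul]
  congr 1
  funext x
  simp only [pairChannel]
  ring

theorem distortion_pairChannel [Fintype C] [Fintype X] [Fintype Y] (q : X × Y → ℝ) (ω : C → ℝ)
    (κ : C → A × B) (α : A → X → ℝ) (β : B → Y → ℝ) (δ : X → Xh → ℝ) (π : A × Y → Xh) :
    ∑ x, ∑ y, ∑ c, q (x, y) * pairChannel ω κ α β (x, y) c * δ x (π ((κ c).1, y)) =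
      ∑ c, ω c * pairCost β (sliceDistortion q α δ π) (κ c) := by
  simp only [pairCost, sliceDistortion, Finset.mul_sum]
  rw [Finset.sum_comm]
  simp only [fun y => Finset.sum_comm (s := (Finset.univ : Finset X))
    (t := (Finset.univ : Finset C)) (f := fun x c =>
      q (x, y) * pairChannel ω κ α β (x, y) c * δ x (π ((κ c).1, y)))]
  rw [Finset.sum_comm]
  refine Finset.sum_congr rfl fun c _ => Finset.sum_congr rfl fun y _ =>
    Finset.sum_congr rfl fun x _ => ?_
  simp only [pairChannel]
  ring

theorem exists_mem_oneDescRates_le_max [Fintype X] [Fintype Y] {q : X × Y → ℝ} {δ1 : X → Xh → ℝ}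
    {δ2 : Y → Yh → ℝ} {d1 d2 r1 r2 : ℝ} (h1 : r1 ∈ wzRates q δ1 d1)
    (h2 : r2 ∈ wzRates (swap q) δ2 d2) : ∃ r ∈ oneDescRates q δ1 δ2 d1 d2, r ≤ max r1 r2 := by
  obtain ⟨α, π1, hα, hα1, hd1, rfl⟩ := exists_kernel_of_mem_wzRates h1
  obtain ⟨β, π2, hβ, hβ1, hd2, rfl⟩ := exists_kernel_of_mem_wzRates h2
  obtain ⟨ω, κ, hω, hsum, hrate1, hdist1, hrate2, hdist2⟩ := exists_fin_description_pairs hα hβ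
    hα1 hβ1 (f₁ := sliceNegEntropy q α) (g₁ := sliceDistortion q α δ1 π1)
    (f₂ := sliceNegEntropy (swap q) β) (g₂ := sliceDistortion (swap q) β δ2 π2)
    (fun _ => sliceNegEntropy_eq_zero) (fun _ => sliceDistortion_eq_zero)
    (fun _ => sliceNegEntropy_eq_zero) (fun _ => sliceDistortion_eq_zero)
  let W := pairChannel ω κ α β
  have hswap : ∀ x y, W (x, y) = pairChannel ω (fun c => (κ c).swap) β α (y, x) :=
    fun x y => (pairChannel_swap ω κ α β (x, y)).symm
  refine ⟨_, ⟨W, fun t => ⟨fun c => mul_nonneg (hω c) (mul_nonneg (hα _ _) (hβ _ _)),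
    hsum t.1 t.2⟩, ⟨fun t => π1 ((κ t.1).1, t.2), ?_⟩, ⟨fun t => π2 ((κ t.1).2, t.2), ?_⟩, rfl⟩,
    max_le_max ?_ ?_⟩
  · exact (distortion_pairChannel q ω κ α β δ1 π1).trans_le (hdist1.trans_le hd1)
  · rw [Finset.sum_comm]
    simp only [hswap]
    exact (distortion_pairChannel (swap q) ω (fun c => (κ c).swap) β α δ2 π2).trans_le
      (hdist2.trans_le hd2)
  · rw [condMI_pairChannel hsum]
    exact add_le_add_right hrate1 _
  · simp only [hswap]
    exact (condMI_pairChannel (q := swap q) fun y x => by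
      rw [← hswap]; exact hsum x y).trans_le (add_le_add_right hrate2 _)

theorem nonneg_of_mem_oneDescRates [Fintype X] [Fintype Y] {q : X × Y → ℝ} (hq : 0 ≤ q)
    {δ1 : X → Xh → ℝ} {δ2 : Y → Yh → ℝ} {d1 d2 r : ℝ} (hr : r ∈ oneDescRates q δ1 δ2 d1 d2) :
    0 ≤ r := by
  obtain ⟨W, hW, -, -, rfl⟩ := hr
  exact le_max_of_le_left (condMI_nonneg fun t => mul_nonneg (hq _) ((hW _).1 _))

theorem oneDescUB_le_max_wzRD [Fintype X] [Fintype Y] {q : X × Y → ℝ} (hq : 0 ≤ q)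
    {δ1 : X → Xh → ℝ} {δ2 : Y → Yh → ℝ} {d1 d2 : ℝ} (h1 : (wzRates q δ1 d1).Nonempty)
    (h2 : (wzRates (swap q) δ2 d2).Nonempty) :
    oneDescUB q δ1 δ2 d1 d2 ≤ max (wzRD q δ1 d1) (wzRD (swap q) δ2 d2) := by
  refine le_of_forall_pos_le_add fun ε hε => ?_
  obtain ⟨r1, hr1, hlt1⟩ := Real.lt_sInf_add_pos h1 hε
  obtain ⟨r2, hr2, hlt2⟩ := Real.lt_sInf_add_pos h2 hε
  obtain ⟨r, hr, hle⟩ := exists_mem_oneDescRates_le_max hr1 hr2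
  calc oneDescUB q δ1 δ2 d1 d2 ≤ r := csInf_le ⟨0, fun _ => nonneg_of_mem_oneDescRates hq⟩ hr
    _ ≤ max r1 r2 := hle
    _ ≤ max (wzRD q δ1 d1 + ε) (wzRD (swap q) δ2 d2 + ε) := max_le_max hlt1.le hlt2.le
    _ = _ := max_add_add_right _ _ _

end ProductDescription

section FiniteProbability

open Filter Topology

variable {ι Ω Ω' S : Type*} [Fintype Ω]

/-- The probability that the mass function `p` gives to the event `s`. -/
def mass (p : Ω → ℝ) (s : Set Ω) : ℝ := ∑ ω, s.indicator p ω

theorem mass_mono {p : Ω → ℝ} (hp : 0 ≤ p) {s t : Set Ω} (h : s ⊆ t) : mass p s ≤ mass p t :=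
  Finset.sum_le_sum fun _ _ => Set.indicator_le_indicator_of_subset h hp _

theorem mass_nonneg {p : Ω → ℝ} (hp : 0 ≤ p) (s : Set Ω) : 0 ≤ mass p s :=
  Finset.sum_nonneg fun _ _ => Set.indicator_apply_nonneg fun _ => hp _

theorem mass_pos {p : Ω → ℝ} (hp : 0 ≤ p) {s : Set Ω} {ω : Ω} (hω : ω ∈ s) (h : p ω ≠ 0) :
    0 < mass p s :=
  Finset.sum_pos' (fun _ _ => Set.indicator_apply_nonneg fun _ => hp _)
    ⟨ω, Finset.mem_univ ω, by simpa [hω] using (hp ω).lt_of_ne' h⟩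

theorem mass_union_le {p : Ω → ℝ} (hp : 0 ≤ p) (s t : Set Ω) :
    mass p (s ∪ t) ≤ mass p s + mass p t := by
  simp only [mass, ← Finset.sum_add_distrib, ← Set.indicator_union_add_inter_apply p s t]
  exact Finset.sum_le_sum fun ω _ =>
    le_add_of_nonneg_right (Set.indicator_apply_nonneg fun _ => hp _)

theorem mass_iUnion_le {κ : Type*} [Fintype κ] {p : Ω → ℝ} (hp : 0 ≤ p) (s : κ → Set Ω) :
    mass p (⋃ k, s k) ≤ ∑ k, mass p (s k) := by
  simp only [mass]
  rw [Finset.sum_comm]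
  refine Finset.sum_le_sum fun ω _ => Set.indicator_apply_le' (fun hω => ?_) fun _ =>
    Finset.sum_nonneg fun _ _ => Set.indicator_apply_nonneg fun _ => hp _
  obtain ⟨k, hk⟩ := Set.mem_iUnion.1 hω
  exact (Set.indicator_of_mem hk p).symm.trans_le (Finset.single_le_sum
    (f := fun k => (s k).indicator p ω) (fun _ _ => Set.indicator_apply_nonneg fun _ => hp _)
    (Finset.mem_univ k))

theorem tendsto_mass_compl_inter {Ω : ℕ → Type*} [∀ n, Fintype (Ω n)] {p : (n : ℕ) → Ω n → ℝ}
    (hp : ∀ n, 0 ≤ p n) {s t : (n : ℕ) → Set (Ω n)}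
    (hs : Tendsto (fun n => mass (p n) (s n)ᶜ) atTop (𝓝 0))
    (ht : Tendsto (fun n => mass (p n) (t n)ᶜ) atTop (𝓝 0)) :
    Tendsto (fun n => mass (p n) (s n ∩ t n)ᶜ) atTop (𝓝 0) := by
  refine squeeze_zero (fun n => mass_nonneg (hp n) _) (fun n => ?_) (by simpa using hs.add ht)
  rw [Set.compl_inter]
  exact mass_union_le (hp n) _ _

theorem mass_add_mass_compl (p : Ω → ℝ) (s : Set Ω) : mass p s + mass p sᶜ = ∑ ω, p ω := by
  simp only [mass, ← Finset.sum_add_distrib, Set.indicator_self_add_compl_apply]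

theorem mass_le_sum {p : Ω → ℝ} (hp : 0 ≤ p) (s : Set Ω) : mass p s ≤ ∑ ω, p ω :=
  (le_add_of_nonneg_right (mass_nonneg hp sᶜ)).trans_eq (mass_add_mass_compl p s)

theorem exists_le_of_sum_mul_le {w f : Ω → ℝ} {a : ℝ} (hw : 0 ≤ w) (hw1 : ∑ ω, w ω = 1)
    (h : ∑ ω, w ω * f ω ≤ a) : ∃ ω, f ω ≤ a := by
  obtain ⟨ω, -, hω, hle⟩ : ∃ ω ∈ Finset.univ, w ω ≠ 0 ∧ w ω * f ω ≤ w ω * a := by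
    by_contra! hlt
    have hterm : ∀ ω, w ω * a ≤ w ω * f ω := fun ω => by
      rcases eq_or_ne (w ω) 0 with h0 | h0
      · simp [h0]
      · exact (hlt ω (Finset.mem_univ ω) h0).le
    obtain ⟨ω, -, hω⟩ := Finset.exists_ne_zero_of_sum_ne_zero (hw1.trans_ne one_ne_zero)
    have := Finset.sum_lt_sum (fun ω _ => hterm ω)
      ⟨ω, Finset.mem_univ ω, hlt ω (Finset.mem_univ ω) hω⟩
    rw [← Finset.sum_mul, hw1, one_mul] at this
    exact this.not_ge h
  exact ⟨ω, le_of_mul_le_mul_left hle ((hw ω).lt_of_ne' hω)⟩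

variable [Fintype ι]

theorem prod_eq_two_rpow_sum_logb {a : ι → ℝ} (ha : ∀ i, 0 < a i) :
    ∏ i, a i = 2 ^ ∑ i, Real.logb 2 (a i) := by
  rw [Real.rpow_sum_of_pos two_pos]
  exact Finset.prod_congr rfl fun i _ => (Real.rpow_logb two_pos (by norm_num) (ha i)).symm

/-- The law of a family of independent variables, all with law `p`. -/
def iidLaw (p : S → ℝ) (s : ι → S) : ℝ := ∏ i, p (s i)

theorem iidLaw_nonneg {p : S → ℝ} (hp : 0 ≤ p) : (0 : (ι → S) → ℝ) ≤ iidLaw p :=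
  fun _ => Finset.prod_nonneg fun _ _ => hp _

variable [DecidableEq ι] [Fintype S]

theorem sum_prod_apply_eq_prod_sum (f : ι → S → ℝ) :
    ∑ s : ι → S, ∏ i, f i (s i) = ∏ i, ∑ a, f i a := by
  rw [Finset.prod_univ_sum, Fintype.piFinset_univ]

theorem sum_iidLaw (p : S → ℝ) : ∑ s : ι → S, iidLaw p s = (∑ a, p a) ^ Fintype.card ι := by
  simp only [iidLaw, sum_prod_apply_eq_prod_sum, Finset.prod_const, Finset.card_univ]

theorem mass_iidLaw_forall_mem (p : S → ℝ) (t : Set S) :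
    mass (iidLaw p) {s : ι → S | ∀ i, s i ∈ t} = mass p t ^ Fintype.card ι := by
  rw [mass, mass, ← sum_iidLaw]
  refine Finset.sum_congr rfl fun s _ => ?_
  by_cases h : ∀ i, s i ∈ t
  · rw [Set.indicator_of_mem (show s ∈ {s : ι → S | ∀ i, s i ∈ t} from h)]
    exact Finset.prod_congr rfl fun i _ => (Set.indicator_of_mem (h i) p).symm
  · rw [Set.indicator_of_notMem (show s ∉ {s : ι → S | ∀ i, s i ∈ t} from h)]
    obtain ⟨i, hi⟩ := not_forall.1 h
    exact (Finset.prod_eq_zero (Finset.mem_univ i) (Set.indicator_of_notMem hi p)).symm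

theorem sum_iidLaw_mul_apply {p : S → ℝ} (hp1 : ∑ a, p a = 1) (f : S → ℝ) (j : ι) :
    ∑ s, iidLaw p s * f (s j) = ∑ a, p a * f a := by
  have hprod : ∀ s : ι → S, iidLaw p s * f (s j) = ∏ i, p (s i) * if i = j then f (s i) else 1 :=
    fun s => by rw [Finset.prod_mul_distrib]; simp [iidLaw]
  simp only [hprod]
  rw [sum_prod_apply_eq_prod_sum fun i a => p a * if i = j then f a else 1,
    Finset.prod_eq_single j (fun i _ hi => by simp [hi, hp1]) (by simp)]
  simp

theorem sum_iidLaw_mul_sum {p : S → ℝ} (hp1 : ∑ a, p a = 1) (f : S → ℝ) :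
    ∑ s : ι → S, iidLaw p s * ∑ i, f (s i) = Fintype.card ι * ∑ a, p a * f a := by
  simp only [Finset.mul_sum]
  rw [Finset.sum_comm]
  simp only [sum_iidLaw_mul_apply hp1, Finset.sum_const, Finset.card_univ, nsmul_eq_mul,
    Finset.mul_sum]

theorem mass_iidLaw_apply_eq_apply {p : S → ℝ} (hp1 : ∑ a, p a = 1) {i j : ι} (hij : i ≠ j) :
    mass (iidLaw p) {s : ι → S | s i = s j} = ∑ a, p a ^ 2 := by
  have hsplit : ∀ t : S × ({k // k ≠ j} → S),
      {s : ι → S | s i = s j}.indicator (iidLaw p) ((Equiv.funSplitAt j S).symm t) =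
        p t.1 * (iidLaw p t.2 * if t.2 ⟨i, hij⟩ = t.1 then 1 else 0) := fun t => by
    have hlaw : iidLaw p ((Equiv.funSplitAt j S).symm t) = p t.1 * iidLaw p t.2 := by
      rw [iidLaw, Fintype.prod_eq_mul_prod_subtype_ne _ j]
      simp only [Equiv.funSplitAt_symm_apply, dite_true]
      exact congrArg _ (Finset.prod_congr rfl fun k _ => by simp [k.2])
    simp [Set.indicator_apply, hlaw, hij, mul_ite]
  rw [mass, ← (Equiv.funSplitAt j S).symm.sum_comp, Fintype.sum_prod_type]
  simp only [hsplit, ← Finset.mul_sum]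
  refine Finset.sum_congr rfl fun a _ => ?_
  rw [sum_iidLaw_mul_apply hp1 (fun b => if b = a then 1 else 0), sq]
  simp

theorem exists_exp_moment_lt_one {p f : S → ℝ} (hp1 : ∑ a, p a = 1) (hf : ∑ a, p a * f a < 0) :
    ∃ t > 0, ∑ a, p a * Real.exp (t * f a) < 1 := by
  have hderiv : HasDerivAt (fun t => ∑ a, p a * Real.exp (t * f a)) (∑ a, p a * f a) 0 := by
    refine HasDerivAt.fun_sum fun a _ => ?_
    simpa using (((hasDerivAt_id (0 : ℝ)).mul_const (f a)).exp).const_mul (p a)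
  obtain ⟨t, hslope, ht⟩ := ((hderiv.hasDerivWithinAt.liminf_right_slope_le hf).and_eventually
    self_mem_nhdsWithin).exists
  refine ⟨t, ht, ?_⟩
  rw [slope_def_field, div_neg_iff] at hslope
  simp only [zero_mul, Real.exp_zero, mul_one, hp1, sub_zero] at hslope
  have : 0 < t := ht
  rcases hslope with h | h <;> linarith [h.1, h.2]

theorem tendsto_mass_iidLaw_sum_pos {p f : S → ℝ} (hp : 0 ≤ p) (hp1 : ∑ a, p a = 1)
    (hf : ∑ a, p a * f a < 0) :
    Tendsto (fun n : ℕ => mass (iidLaw p) {s : Fin n → S | 0 < ∑ i, f (s i)}) atTop (𝓝 0) := by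
  obtain ⟨t, ht, hlt⟩ := exists_exp_moment_lt_one hp1 hf
  have h0 : 0 ≤ ∑ a, p a * Real.exp (t * f a) :=
    Finset.sum_nonneg fun a _ => mul_nonneg (hp a) (Real.exp_pos _).le
  refine squeeze_zero (fun n => mass_nonneg (iidLaw_nonneg hp) _) (fun n => ?_)
    (tendsto_pow_atTop_nhds_zero_of_lt_one h0 hlt)
  calc mass (iidLaw p) {s : Fin n → S | 0 < ∑ i, f (s i)}
      ≤ ∑ s : Fin n → S, iidLaw p s * Real.exp (t * ∑ i, f (s i)) := by
        refine Finset.sum_le_sum fun s _ => Set.indicator_apply_le' (fun hs => ?_) fun _ => ?_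
        · exact le_mul_of_one_le_right (iidLaw_nonneg hp s) (Real.one_le_exp (mul_pos ht hs).le)
        · exact mul_nonneg (iidLaw_nonneg hp s) (Real.exp_pos _).le
    _ = ∑ s : Fin n → S, iidLaw (fun a => p a * Real.exp (t * f a)) s := by
        simp only [iidLaw, Finset.prod_mul_distrib, ← Real.exp_sum, Finset.mul_sum]
    _ = (∑ a, p a * Real.exp (t * f a)) ^ n := by rw [sum_iidLaw, Fintype.card_fin]

theorem tendsto_mass_iidLaw_sum_gt {p f : S → ℝ} (hp : 0 ≤ p) (hp1 : ∑ a, p a = 1) {a : ℝ}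
    (hf : ∑ s, p s * f s < a) :
    Tendsto (fun n : ℕ => mass (iidLaw p) {s : Fin n → S | n * a < ∑ i, f (s i)}) atTop (𝓝 0) := by
  simpa using tendsto_mass_iidLaw_sum_pos (f := fun s => f s - a) hp hp1 (by
    simpa [mul_sub, ← Finset.sum_mul, hp1] using hf)

/-- The mean under `p` of the log-likelihood ratio of `a` to `b`. -/
def meanLogRatio (p a b : S → ℝ) : ℝ := ∑ s, p s * (Real.logb 2 (a s) - Real.logb 2 (b s))

theorem meanLogRatio_add_meanLogRatio (p a b c : S → ℝ) :
    meanLogRatio p a b + meanLogRatio p b c = meanLogRatio p a c := by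
  simp only [meanLogRatio, ← Finset.sum_add_distrib, ← mul_add, sub_add_sub_cancel]

/-- Sequences along which the likelihood ratio of `a` to `b` is at most `2 ^ (n R)`. The comparison
is between products, so that it also constrains sequences on which `b` vanishes. -/
def ratioTypical (a b : S → ℝ) (R : ℝ) (n : ℕ) : Set (Fin n → S) :=
  {s | ∏ i, a (s i) ≤ 2 ^ (n * R) * ∏ i, b (s i)}

theorem tendsto_mass_iidLaw_compl_ratioTypical {p a b : S → ℝ} (hp : 0 ≤ p) (hp1 : ∑ s, p s = 1)
    (ha : ∀ s, p s ≠ 0 → 0 < a s) (hb : ∀ s, p s ≠ 0 → 0 < b s) {R : ℝ}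
    (hR : meanLogRatio p a b < R) :
    Tendsto (fun n : ℕ => mass (iidLaw p) (ratioTypical a b R n)ᶜ) atTop (𝓝 0) := by
  refine squeeze_zero (fun n => mass_nonneg (iidLaw_nonneg hp) _) (fun n => ?_)
    (tendsto_mass_iidLaw_sum_gt hp hp1 hR)
  refine Finset.sum_le_sum fun s _ => Set.indicator_apply_le' (fun hs => ?_) fun _ =>
    Set.indicator_apply_nonneg fun _ => iidLaw_nonneg hp s
  by_cases hs0 : iidLaw p s = 0
  · exact hs0.trans_le (Set.indicator_apply_nonneg fun _ => iidLaw_nonneg hp s)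
  have hpos : ∀ i, p (s i) ≠ 0 := fun i => Finset.prod_ne_zero_iff.1 hs0 i (Finset.mem_univ i)
  rw [Set.indicator_of_mem]
  contrapose! hs
  simp only [Set.mem_compl_iff, ratioTypical, Set.mem_ofPred_eq, not_lt, not_not,
    Finset.sum_sub_distrib] at hs ⊢
  rw [prod_eq_two_rpow_sum_logb fun i => ha _ (hpos i),
    prod_eq_two_rpow_sum_logb fun i => hb _ (hpos i), ← Real.rpow_add two_pos]
  exact Real.rpow_le_rpow_of_exponent_le one_le_two (by linarith)

end FiniteProbability

section RandomBinning

variable {J K Z : Type}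

/-- The index that a receiver guesses from the bin `k` of the binning `b`, when it knows that the
index lies in `S`; it is arbitrary when no index of `S` lies in that bin. -/
def binDecode [Nonempty J] (b : J → K) (S : Set J) (k : K) : J :=
  Classical.epsilon fun j => j ∈ S ∧ b j = k

theorem binDecode_eq [Nonempty J] {b : J → K} {S : Set J} {j : J} (hj : j ∈ S)
    (hinj : ∀ i ∈ S, b i = b j → i = j) : binDecode b S (b j) = j :=
  have h : binDecode b S (b j) ∈ S ∧ b (binDecode b S (b j)) = b j :=
    Classical.epsilon_spec (p := fun i => i ∈ S ∧ b i = b j) ⟨j, hj, rfl⟩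
  hinj _ h.1 h.2

variable [Fintype J] [DecidableEq J] [Fintype K]

theorem mass_binDecode_ne_le [Nonempty J] {u : K → ℝ} (hu : IsPmf u) {S : Set J} {j : J}
    (hj : j ∈ S) :
    mass (iidLaw u) {b | binDecode b S (b j) ≠ j} ≤ (∑ i, S.indicator 1 i) * ∑ k, u k ^ 2 := by
  let collision : J → Set (J → K) := fun i => {b | i ∈ S ∧ i ≠ j ∧ b i = b j}
  have hsub : {b | binDecode b S (b j) ≠ j} ⊆ ⋃ i, collision i := fun b hb => by
    by_contra hcol
    refine hb (binDecode_eq hj fun i hi hbi => ?_)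
    by_contra hij
    exact hcol (Set.mem_iUnion.2 ⟨i, hi, hij, hbi⟩)
  refine (mass_mono (iidLaw_nonneg hu.1) hsub).trans
    ((mass_iUnion_le (iidLaw_nonneg hu.1) collision).trans ?_)
  rw [Finset.sum_mul]
  refine Finset.sum_le_sum fun i _ => ?_
  by_cases hi : i ∈ S ∧ i ≠ j
  · rw [Set.indicator_of_mem hi.1, Pi.one_apply, one_mul, ← mass_iidLaw_apply_eq_apply hu.2 hi.2]
    exact mass_mono (iidLaw_nonneg hu.1) fun b hb => hb.2.2
  · have hempty : collision i = ∅ := Set.eq_empty_of_forall_notMem fun b hb => hi ⟨hb.1, hb.2.1⟩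
    rw [hempty]
    simpa [mass] using mul_nonneg
      (Set.indicator_apply_nonneg (s := S) (f := 1) fun _ => zero_le_one' ℝ)
      (Finset.sum_nonneg fun k _ => sq_nonneg (u k))

/-- The index of a codeword of the codebook `c` lying in `T`, arbitrary if there is none. -/
def encodeIndex [Nonempty J] (T : Set Z) (c : J → Z) : J := Classical.epsilon fun j => c j ∈ T

/-- The codeword guessed from the bin of the index sent for `T` by a receiver that knows that this
codeword lies in `S`. -/
def decodedWord [Nonempty J] (T S : Set Z) (c : J → Z) (b : J → K) : Z :=
  c (binDecode b (c ⁻¹' S) (b (encodeIndex T c)))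

theorem mass_decodedWord_failure_le [Nonempty J] {u : K → ℝ} (hu : IsPmf u) {T S₁ S₂ : Set Z}
    (h₁ : T ⊆ S₁) (h₂ : T ⊆ S₂) (c : J → Z) :
    mass (iidLaw u)
        {b | ¬(decodedWord T S₁ c b ∈ T ∧ decodedWord T S₁ c b = decodedWord T S₂ c b)} ≤
      {c : J → Z | ∀ j, c j ∈ Tᶜ}.indicator 1 c +
        (∑ j, S₁.indicator 1 (c j) + ∑ j, S₂.indicator 1 (c j)) * ∑ k, u k ^ 2 := by
  have hcount : ∀ S : Set Z, 0 ≤ ∑ j, S.indicator (1 : Z → ℝ) (c j) := fun S =>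
    Finset.sum_nonneg fun _ _ => Set.indicator_apply_nonneg fun _ => zero_le_one
  by_cases hc : ∀ j, c j ∈ Tᶜ
  · rw [Set.indicator_of_mem (show c ∈ {c : J → Z | ∀ j, c j ∈ Tᶜ} from hc)]
    refine (mass_le_sum (iidLaw_nonneg hu.1) _).trans ?_
    rw [sum_iidLaw, hu.2, one_pow]
    exact le_add_of_nonneg_right (mul_nonneg (add_nonneg (hcount _) (hcount _))
      (Finset.sum_nonneg fun k _ => sq_nonneg (u k)))
  · rw [Set.indicator_of_notMem (show c ∉ {c : J → Z | ∀ j, c j ∈ Tᶜ} from hc), zero_add, add_mul]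
    have hj : c (encodeIndex T c) ∈ T := by
      simp only [Set.mem_compl_iff, not_forall, not_not] at hc
      exact Classical.epsilon_spec hc
    have hsub : {b : J → K |
          ¬(decodedWord T S₁ c b ∈ T ∧ decodedWord T S₁ c b = decodedWord T S₂ c b)} ⊆
        {b | binDecode b (c ⁻¹' S₁) (b (encodeIndex T c)) ≠ encodeIndex T c} ∪
        {b | binDecode b (c ⁻¹' S₂) (b (encodeIndex T c)) ≠ encodeIndex T c} := fun b hb => by
      by_contra hgood
      simp only [Set.mem_union, Set.mem_ofPred_eq, not_or, not_not] at hgood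
      exact hb (by rw [decodedWord, decodedWord, hgood.1, hgood.2]; exact ⟨hj, rfl⟩)
    exact (mass_mono (iidLaw_nonneg hu.1) hsub).trans
      ((mass_union_le (iidLaw_nonneg hu.1) _ _).trans
        (add_le_add (mass_binDecode_ne_le hu (h₁ hj)) (mass_binDecode_ne_le hu (h₂ hj))))

variable [Fintype Z]

theorem mass_iidLaw_forall_compl_le {p w : Z → ℝ} (hp : IsPmf p) (hw : IsPmf w) {A : ℝ}
    (hA : 0 < A) {T : Set Z} (hT : ∀ z ∈ T, w z ≤ A * p z) :
    mass (iidLaw p) {c : J → Z | ∀ j, c j ∈ Tᶜ} ≤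
      mass w Tᶜ + Real.exp (-(Fintype.card J / A)) := by
  have hpT := mass_add_mass_compl p T
  have hwT := mass_add_mass_compl w T
  have hwp : mass w T ≤ A * mass p T := by
    rw [mass, mass, Finset.mul_sum]
    refine Finset.sum_le_sum fun z _ => Set.indicator_apply_le' (fun hz => ?_) fun hz => ?_
    · rw [Set.indicator_of_mem hz]
      exact hT z hz
    · rw [Set.indicator_of_notMem hz, mul_zero]
  rw [hp.2] at hpT
  rw [hw.2] at hwT
  rw [mass_iidLaw_forall_mem]
  calc mass p Tᶜ ^ Fintype.card J
      ≤ Real.exp (-(mass w T / A)) ^ Fintype.card J := by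
        refine pow_le_pow_left₀ (mass_nonneg hp.1 _) ?_ _
        have hdiv : mass w T / A ≤ mass p T := (div_le_iff₀' hA).2 hwp
        linarith [Real.add_one_le_exp (-(mass w T / A))]
    _ = Real.exp (mass w Tᶜ * 0 + mass w T * (-(Fintype.card J / A))) := by
        rw [← Real.exp_nat_mul]
        ring_nf
    _ ≤ mass w Tᶜ * Real.exp 0 + mass w T * Real.exp (-(Fintype.card J / A)) :=
        convexOn_exp.2 (Set.mem_univ _) (Set.mem_univ _) (mass_nonneg hw.1 _)
          (mass_nonneg hw.1 _) (by linarith)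
    _ ≤ mass w Tᶜ + Real.exp (-(Fintype.card J / A)) := by
        rw [Real.exp_zero, mul_one]
        exact add_le_add_right (mul_le_of_le_one_left (Real.exp_pos _).le
          (by linarith [mass_nonneg hw.1 Tᶜ])) _

theorem sum_iidLaw_mul_mass_failure_le [Nonempty J] {p w : Z → ℝ} {u : K → ℝ} (hp : IsPmf p)
    (hw : IsPmf w) (hu : IsPmf u) {A : ℝ} (hA : 0 < A) {T S₁ S₂ : Set Z} (h₁ : T ⊆ S₁) (h₂ : T ⊆ S₂)
    (hT : ∀ z ∈ T, w z ≤ A * p z) :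
    ∑ c : J → Z, iidLaw p c * mass (iidLaw u)
        {b | ¬(decodedWord T S₁ c b ∈ T ∧ decodedWord T S₁ c b = decodedWord T S₂ c b)} ≤
      mass w Tᶜ + Real.exp (-(Fintype.card J / A)) +
        Fintype.card J * (mass p S₁ + mass p S₂) * ∑ k, u k ^ 2 := by
  have hmass : ∀ S : Set Z, ∑ z, p z * S.indicator 1 z = mass p S := fun S =>
    Finset.sum_congr rfl fun z _ => by simp [Set.indicator_apply]
  calc _ ≤ ∑ c : J → Z, iidLaw p c * ({c : J → Z | ∀ j, c j ∈ Tᶜ}.indicator 1 c +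
        (∑ j, S₁.indicator 1 (c j) + ∑ j, S₂.indicator 1 (c j)) * ∑ k, u k ^ 2) :=
      Finset.sum_le_sum fun c _ => mul_le_mul_of_nonneg_left
        (mass_decodedWord_failure_le hu h₁ h₂ c) (iidLaw_nonneg hp.1 c)
    _ = mass (iidLaw p) {c : J → Z | ∀ j, c j ∈ Tᶜ} +
        Fintype.card J * (mass p S₁ + mass p S₂) * ∑ k, u k ^ 2 := by
      simp only [mul_add, ← mul_assoc, Finset.sum_add_distrib, add_mul, ← Finset.sum_mul,
        sum_iidLaw_mul_sum hp.2, hmass]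
      congr 1
      exact Finset.sum_congr rfl fun c _ => by simp [Set.indicator_apply]
    _ ≤ _ := add_le_add_left (mass_iidLaw_forall_compl_le hp hw hA hT) _

theorem exists_binning_code {Ω V₁ V₂ : Type} [Fintype Ω] {q : Ω → ℝ} (hq : 0 ≤ q)
    {W : Ω → Z → ℝ} (hW : IsCondPmf W) {p : Z → ℝ} (hp : IsPmf p) {v₁ : Ω → V₁} {v₂ : Ω → V₂}
    {T : Ω → Set Z} {S₁ : V₁ → Set Z} {S₂ : V₂ → Set Z} (h₁ : ∀ ω, T ω ⊆ S₁ (v₁ ω))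
    (h₂ : ∀ ω, T ω ⊆ S₂ (v₂ ω)) {A κ₁ κ₂ : ℝ} (hA : 0 < A)
    (hT : ∀ ω, ∀ z ∈ T ω, W ω z ≤ A * p z) (hκ₁ : ∀ v, mass p (S₁ v) ≤ κ₁)
    (hκ₂ : ∀ v, mass p (S₂ v) ≤ κ₂) (N M : ℕ) [NeZero N] [NeZero M] :
    ∃ (f : Ω → Fin M) (g₁ : Fin M × V₁ → Z) (g₂ : Fin M × V₂ → Z),
      mass q {ω | ¬(g₁ (f ω, v₁ ω) ∈ T ω ∧ g₁ (f ω, v₁ ω) = g₂ (f ω, v₂ ω))} ≤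
        ∑ ω, q ω * (mass (W ω) (T ω)ᶜ + Real.exp (-(N / A)) + N * (κ₁ + κ₂) / M) := by
  let u : Fin M → ℝ := fun _ => (M : ℝ)⁻¹
  have hu : IsPmf u := ⟨fun _ => by positivity, by simp [u, NeZero.ne M]⟩
  have hu2 : ∑ k, u k ^ 2 = (M : ℝ)⁻¹ := by simp [u, sq, NeZero.ne M]
  let failure : Ω → (Fin N → Z) → (Fin N → Fin M) → Prop := fun ω c b =>
    ¬(decodedWord (T ω) (S₁ (v₁ ω)) c b ∈ T ω ∧
      decodedWord (T ω) (S₁ (v₁ ω)) c b = decodedWord (T ω) (S₂ (v₂ ω)) c b)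
  have haverage : ∑ cb : (Fin N → Z) × (Fin N → Fin M), iidLaw p cb.1 * iidLaw u cb.2 *
        mass q {ω | failure ω cb.1 cb.2} =
      ∑ ω, q ω * ∑ c, iidLaw p c * mass (iidLaw u) {b | failure ω c b} := by
    simp only [mass, Finset.mul_sum]
    rw [Finset.sum_comm]
    refine Finset.sum_congr rfl fun ω _ => ?_
    rw [Fintype.sum_prod_type]
    refine Finset.sum_congr rfl fun c _ => Finset.sum_congr rfl fun b _ => ?_
    by_cases h : failure ω c b <;> simp [h, mul_comm]
  have hpointwise : ∀ ω, ∑ c, iidLaw p c * mass (iidLaw u) {b | failure ω c b} ≤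
      mass (W ω) (T ω)ᶜ + Real.exp (-(N / A)) + N * (κ₁ + κ₂) / M := fun ω => by
    have h := sum_iidLaw_mul_mass_failure_le (J := Fin N) hp (hW ω) hu hA (h₁ ω) (h₂ ω) (hT ω)
    rw [hu2, Fintype.card_fin, ← div_eq_mul_inv] at h
    refine h.trans ?_
    gcongr
    exacts [hκ₁ _, hκ₂ _]
  obtain ⟨⟨c, b⟩, hcb⟩ := exists_le_of_sum_mul_le
    (w := fun cb : (Fin N → Z) × (Fin N → Fin M) => iidLaw p cb.1 * iidLaw u cb.2)
    (fun cb => mul_nonneg (iidLaw_nonneg hp.1 _) (iidLaw_nonneg hu.1 _))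
    (by simp only [Fintype.sum_prod_type, ← Finset.mul_sum, sum_iidLaw, hp.2, hu.2, one_pow,
      mul_one])
    (haverage.trans_le
      (Finset.sum_le_sum fun ω _ => mul_le_mul_of_nonneg_left (hpointwise ω) (hq ω)))
  exact ⟨fun ω => b (encodeIndex (T ω) c), fun kv => c (binDecode b (c ⁻¹' S₁ kv.2) kv.1),
    fun kv => c (binDecode b (c ⁻¹' S₂ kv.2) kv.1), hcb⟩

end RandomBinning

section BlockCoding

open Filter Topology

variable {A C V V₁ V₂ ι : Type}

/-- The joint law of a source letter with law `q` and the output of the channel `W`. -/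
def jointLaw (q : A → ℝ) (W : A → C → ℝ) (t : A × C) : ℝ := q t.1 * W t.1 t.2

/-- The law of the output of the channel `W` driven by a source letter with law `q`. -/
def outputLaw [Fintype A] (q : A → ℝ) (W : A → C → ℝ) (c : C) : ℝ := ∑ a, jointLaw q W (a, c)

/-- The conditional law of the output of the channel `W` given the value `v a` of a statistic of the
source letter `a`; it vanishes at values of probability zero. -/
def viewKernel [Fintype A] (q : A → ℝ) (W : A → C → ℝ) (v : A → V) (t : V × C) : ℝ :=
  mass (fun a => jointLaw q W (a, t.2)) (v ⁻¹' {t.1}) / mass q (v ⁻¹' {t.1})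

/-- The memoryless extension of the channel `W`. -/
def blockChannel [Fintype ι] (W : A → C → ℝ) (a : ι → A) (c : ι → C) : ℝ := ∏ i, W (a i) (c i)

theorem isCondPmf_blockChannel [Fintype ι] [DecidableEq ι] [Fintype C] {W : A → C → ℝ}
    (hW : IsCondPmf W) : IsCondPmf (blockChannel W : (ι → A) → (ι → C) → ℝ) := fun a =>
  ⟨fun c => Finset.prod_nonneg fun i _ => (hW (a i)).1 (c i), by
    simp only [blockChannel, sum_prod_apply_eq_prod_sum fun i => W (a i), (hW _).2,
      Finset.prod_const_one]⟩

theorem isPmf_iidLaw [Fintype ι] [DecidableEq ι] [Fintype A] {p : A → ℝ} (hp : IsPmf p) :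
    IsPmf (iidLaw p : (ι → A) → ℝ) :=
  ⟨iidLaw_nonneg hp.1, by rw [sum_iidLaw, hp.2, one_pow]⟩

theorem channel_pos [Fintype C] {q : A → ℝ} {W : A → C → ℝ} (hW : IsCondPmf W) {t : A × C}
    (ht : jointLaw q W t ≠ 0) : 0 < W t.1 t.2 :=
  ((hW _).1 _).lt_of_ne' (right_ne_zero_of_mul ht)

variable [Fintype A] [Fintype C] {q : A → ℝ} {W : A → C → ℝ}

theorem isPmf_jointLaw (hq : IsPmf q) (hW : IsCondPmf W) : IsPmf (jointLaw q W) :=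
  ⟨fun t => mul_nonneg (hq.1 _) ((hW _).1 _), by
    simp only [Fintype.sum_prod_type, jointLaw, ← Finset.mul_sum, (hW _).2, mul_one, hq.2]⟩

theorem isPmf_outputLaw (hq : IsPmf q) (hW : IsCondPmf W) : IsPmf (outputLaw q W) :=
  ⟨fun _ => Finset.sum_nonneg fun _ _ => (isPmf_jointLaw hq hW).1 _, by
    rw [← (isPmf_jointLaw hq hW).2, Fintype.sum_prod_type, Finset.sum_comm]; rfl⟩

theorem outputLaw_pos (hq : IsPmf q) (hW : IsCondPmf W) {t : A × C} (ht : jointLaw q W t ≠ 0) :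
    0 < outputLaw q W t.2 :=
  (((isPmf_jointLaw hq hW).1 t).lt_of_ne' ht).trans_le (Finset.single_le_sum
    (f := fun a => jointLaw q W (a, t.2)) (fun _ _ => (isPmf_jointLaw hq hW).1 _)
    (Finset.mem_univ t.1))

theorem viewKernel_nonneg (hq : IsPmf q) (hW : IsCondPmf W) (v : A → V) : 0 ≤ viewKernel q W v :=
  fun t => div_nonneg (mass_nonneg (fun a => (isPmf_jointLaw hq hW).1 (a, t.2)) _)
    (mass_nonneg hq.1 _)

theorem viewKernel_pos (hq : IsPmf q) (hW : IsCondPmf W) (v : A → V) {t : A × C}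
    (ht : jointLaw q W t ≠ 0) : 0 < viewKernel q W v (v t.1, t.2) :=
  div_pos
    (mass_pos (fun a => (isPmf_jointLaw hq hW).1 (a, t.2)) (ω := t.1) rfl ht)
    (mass_pos hq.1 (ω := t.1) rfl (left_ne_zero_of_mul ht))

theorem sum_viewKernel_le_one (hW : IsCondPmf W) (q : A → ℝ) (v : A → V) (y : V) :
    ∑ c, viewKernel q W v (y, c) ≤ 1 := by
  have hsum : ∑ c, mass (fun a => jointLaw q W (a, c)) (v ⁻¹' {y}) = mass q (v ⁻¹' {y}) := by
    simp only [mass]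
    rw [Finset.sum_comm]
    refine Finset.sum_congr rfl fun a _ => ?_
    simp only [Set.indicator_apply]
    by_cases ha : a ∈ v ⁻¹' {y}
    · simp only [ha, if_true, jointLaw, ← Finset.mul_sum, (hW a).2, mul_one]
    · simp only [ha, if_false, Finset.sum_const_zero]
  simp only [viewKernel]
  rw [← Finset.sum_div, hsum]
  exact div_self_le_one _

theorem meanLogRatio_outputLaw_nonneg (hq : IsPmf q) (hW : IsCondPmf W) :
    0 ≤ meanLogRatio (jointLaw q W) (fun t => W t.1 t.2) fun t => outputLaw q W t.2 := by
  have hgibbs := sum_mul_logb_sub_nonneg (P := jointLaw q W)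
    (Q := fun t => q t.1 * outputLaw q W t.2) (isPmf_jointLaw hq hW).1
    (fun t => mul_nonneg (hq.1 _) ((isPmf_outputLaw hq hW).1 _))
    (fun t ht => mul_ne_zero (left_ne_zero_of_mul ht) (outputLaw_pos hq hW ht).ne')
    (by simp only [Fintype.sum_prod_type, (isPmf_jointLaw hq hW).2, ← Finset.mul_sum,
      (isPmf_outputLaw hq hW).2, mul_one, hq.2, le_refl])
  refine hgibbs.trans_eq (Finset.sum_congr rfl fun t _ => ?_)
  by_cases ht : jointLaw q W t = 0
  · simp [ht]
  rw [Real.logb_mul (left_ne_zero_of_mul ht) (outputLaw_pos hq hW ht).ne']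
  conv_lhs => rw [jointLaw, Real.logb_mul (left_ne_zero_of_mul ht) (right_ne_zero_of_mul ht)]
  rw [jointLaw]
  ring

theorem sum_iidLaw_mul_mass_blockChannel [Fintype ι] [DecidableEq ι] (q : A → ℝ) (W : A → C → ℝ)
    (E : Set (ι → A × C)) :
    ∑ a : ι → A, iidLaw q a * mass (blockChannel W a) {c | (fun i => (a i, c i)) ∈ E} =
      mass (iidLaw (jointLaw q W)) E := by
  rw [mass, ← (Equiv.arrowProdEquivProdArrow ι (fun _ => A) fun _ => C).symm.sum_comp,
    Fintype.sum_prod_type]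
  simp only [mass, Finset.mul_sum]
  refine Finset.sum_congr rfl fun a _ => Finset.sum_congr rfl fun c _ => ?_
  by_cases h : (fun i => (a i, c i)) ∈ E
  · simp [Equiv.arrowProdEquivProdArrow, h, iidLaw, blockChannel, jointLaw, Finset.prod_mul_distrib]
  · simp [Equiv.arrowProdEquivProdArrow, h]

theorem mass_iidLaw_ratioTypical_le {p : C → ℝ} {K : V × C → ℝ} (hK : 0 ≤ K)
    (hK1 : ∀ y, ∑ c, K (y, c) ≤ 1) (ρ : ℝ) {n : ℕ} (y : Fin n → V) :
    mass (iidLaw p) {c | (fun i => (y i, c i)) ∈ ratioTypical (fun t => p t.2) K ρ n} ≤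
      2 ^ (n * ρ) := by
  have hpos : (0 : ℝ) < 2 ^ (n * ρ) := Real.rpow_pos_of_pos two_pos _
  calc mass (iidLaw p) {c | (fun i => (y i, c i)) ∈ ratioTypical (fun t => p t.2) K ρ n}
      ≤ ∑ c : Fin n → C, 2 ^ (n * ρ) * ∏ i, K (y i, c i) :=
        Finset.sum_le_sum fun c _ => Set.indicator_apply_le' (fun hc => hc) fun _ =>
          mul_nonneg hpos.le (Finset.prod_nonneg fun i _ => hK _)
    _ = 2 ^ (n * ρ) * ∏ i, ∑ c, K (y i, c) := by
        rw [← Finset.mul_sum, sum_prod_apply_eq_prod_sum fun i c => K (y i, c)]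
    _ ≤ 2 ^ (n * ρ) := mul_le_of_le_one_right hpos.le (Finset.prod_le_one
        (fun i _ => Finset.sum_nonneg fun c _ => hK _) fun i _ => hK1 _)

theorem ceil_mul_div_floor_le {ν r : ℝ} (hν : 0 ≤ ν) (hr : 0 ≤ r) (ρ : ℝ) (n : ℕ) :
    ⌈(2 : ℝ) ^ (n * ν)⌉₊ * (2 : ℝ) ^ (n * ρ) / ⌊(2 : ℝ) ^ (n * r)⌋₊ ≤
      4 * 2 ^ (n * (ν + ρ - r)) := by
  have hone : ∀ t : ℝ, 0 ≤ t → (1 : ℝ) ≤ 2 ^ (n * t) := fun t ht =>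
    Real.one_le_rpow one_le_two (by positivity)
  have hceil := Nat.ceil_le_two_mul (a := (2 : ℝ) ^ (n * ν)) (by linarith [hone ν hν])
  have hfloor := (Nat.div_two_lt_floor (hone r hr)).le
  calc ⌈(2 : ℝ) ^ (n * ν)⌉₊ * (2 : ℝ) ^ (n * ρ) / ⌊(2 : ℝ) ^ (n * r)⌋₊
      ≤ 2 * 2 ^ (n * ν) * 2 ^ (n * ρ) / (2 ^ (n * r) / 2) := by gcongr
    _ = 4 * (2 ^ (n * ν) * 2 ^ (n * ρ) / 2 ^ (n * r)) := by ring
    _ = 4 * 2 ^ (n * (ν + ρ - r)) := by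
      rw [← Real.rpow_add two_pos, ← Real.rpow_sub two_pos]
      ring_nf

theorem tendsto_binning_error {I ν ρ₁ ρ₂ r : ℝ} (hI : I < ν) (hν : 0 ≤ ν) (hr : 0 ≤ r)
    (h₁ : ν + ρ₁ < r) (h₂ : ν + ρ₂ < r) :
    Tendsto (fun n : ℕ => Real.exp (-(⌈(2 : ℝ) ^ (n * ν)⌉₊ / 2 ^ (n * I))) +
      ⌈(2 : ℝ) ^ (n * ν)⌉₊ * ((2 : ℝ) ^ (n * ρ₁) + 2 ^ (n * ρ₂)) / ⌊(2 : ℝ) ^ (n * r)⌋₊)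
      atTop (𝓝 0) := by
  have hlin : ∀ t : ℝ, 0 < t → Tendsto (fun n : ℕ => n * t) atTop atTop := fun t ht =>
    tendsto_natCast_atTop_atTop.atTop_mul_const ht
  have hdecay : ∀ ρ, ν + ρ < r → Tendsto (fun n : ℕ =>
      ⌈(2 : ℝ) ^ (n * ν)⌉₊ * (2 : ℝ) ^ (n * ρ) / ⌊(2 : ℝ) ^ (n * r)⌋₊) atTop (𝓝 0) := fun ρ hρ => by
    refine squeeze_zero (fun n => by positivity) (ceil_mul_div_floor_le hν hr ρ) ?_
    have hbot : Tendsto (fun n : ℕ => n * (ν + ρ - r)) atTop atBot :=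
      tendsto_natCast_atTop_atTop.atTop_mul_const_of_neg (by linarith)
    simpa using ((tendsto_rpow_atBot_of_base_gt_one 2 one_lt_two).comp hbot).const_mul 4
  have hcover : Tendsto (fun n : ℕ => Real.exp (-(⌈(2 : ℝ) ^ (n * ν)⌉₊ / 2 ^ (n * I))))
      atTop (𝓝 0) := by
    refine Real.tendsto_exp_neg_atTop_nhds_zero.comp (tendsto_atTop_mono (fun n => ?_)
      ((tendsto_rpow_atTop_of_base_gt_one 2 one_lt_two).comp (hlin _ (sub_pos.2 hI))))
    rw [Function.comp_apply, mul_sub, Real.rpow_sub two_pos]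
    gcongr
    exact Nat.le_ceil _
  simpa only [mul_add, add_div, add_zero] using hcover.add ((hdecay _ h₁).add (hdecay _ h₂))

theorem exists_blockCode (hq : IsPmf q) (hW : IsCondPmf W) {v₁ : A → V₁} {v₂ : A → V₂}
    {I ρ₁ ρ₂ : ℝ} {n : ℕ} {E : Set (Fin n → A × C)}
    (hE : E ⊆ ratioTypical (fun t => W t.1 t.2) (fun t => outputLaw q W t.2) I n)
    (hE₁ : E ⊆ ratioTypical (fun t => outputLaw q W t.2)
      (fun t => viewKernel q W v₁ (v₁ t.1, t.2)) ρ₁ n)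
    (hE₂ : E ⊆ ratioTypical (fun t => outputLaw q W t.2)
      (fun t => viewKernel q W v₂ (v₂ t.1, t.2)) ρ₂ n) (N M : ℕ) [NeZero N] [NeZero M] :
    ∃ (f : (Fin n → A) → Fin M) (g₁ : Fin M × (Fin n → V₁) → Fin n → C)
      (g₂ : Fin M × (Fin n → V₂) → Fin n → C),
      mass (iidLaw q) {a | ¬((fun i => (a i, g₁ (f a, v₁ ∘ a) i)) ∈ E ∧
        g₁ (f a, v₁ ∘ a) = g₂ (f a, v₂ ∘ a))} ≤
      mass (iidLaw (jointLaw q W)) Eᶜ +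
        (Real.exp (-(N / 2 ^ (n * I))) + N * ((2 : ℝ) ^ (n * ρ₁) + 2 ^ (n * ρ₂)) / M) := by
  have hlist : ∀ {V : Type} (v : A → V) (ρ : ℝ) (y : Fin n → V),
      mass (iidLaw (outputLaw q W)) {c | (fun i => (y i, c i)) ∈
        ratioTypical (fun t => outputLaw q W t.2) (viewKernel q W v) ρ n} ≤ 2 ^ (n * ρ) :=
    fun v ρ => mass_iidLaw_ratioTypical_le (viewKernel_nonneg hq hW v)
      (sum_viewKernel_le_one hW q v) ρ
  obtain ⟨f, g₁, g₂, hfail⟩ := exists_binning_code (isPmf_iidLaw hq).1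
    (isCondPmf_blockChannel hW) (isPmf_iidLaw (isPmf_outputLaw hq hW))
    (v₁ := fun a => v₁ ∘ a) (v₂ := fun a => v₂ ∘ a)
    (T := fun a : Fin n → A => {c | (fun i => (a i, c i)) ∈ E})
    (fun a c hc => hE₁ hc) (fun a c hc => hE₂ hc)
    (Real.rpow_pos_of_pos two_pos _) (fun a c hc => hE hc) (hlist v₁ ρ₁) (hlist v₂ ρ₂) N M
  refine ⟨f, g₁, g₂, hfail.trans_eq ?_⟩
  simp only [mul_add, add_assoc, Finset.sum_add_distrib, ← Finset.sum_mul, (isPmf_iidLaw hq).2,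
    one_mul]
  rw [← sum_iidLaw_mul_mass_blockChannel]
  rfl

theorem exists_pos_add_three_mul_lt {a b r : ℝ} (ha : a < r) (hb : b < r) :
    ∃ s > 0, a + 3 * s < r ∧ b + 3 * s < r :=
  ⟨(r - max a b) / 4, by linarith [max_lt ha hb], by linarith [max_lt ha hb, le_max_left a b],
    by linarith [max_lt ha hb, le_max_right a b]⟩

theorem eventually_exists_blockCode_of_subset_ratioTypical (hq : IsPmf q) (hW : IsCondPmf W)
    {v₁ : A → V₁} {v₂ : A → V₂} {I ν ρ₁ ρ₂ r : ℝ} {E : (n : ℕ) → Set (Fin n → A × C)}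
    (hE : ∀ n, E n ⊆ ratioTypical (fun t => W t.1 t.2) (fun t => outputLaw q W t.2) I n)
    (hE₁ : ∀ n, E n ⊆ ratioTypical (fun t => outputLaw q W t.2)
      (fun t => viewKernel q W v₁ (v₁ t.1, t.2)) ρ₁ n)
    (hE₂ : ∀ n, E n ⊆ ratioTypical (fun t => outputLaw q W t.2)
      (fun t => viewKernel q W v₂ (v₂ t.1, t.2)) ρ₂ n)
    (hlim : Tendsto (fun n => mass (iidLaw (jointLaw q W)) (E n)ᶜ) atTop (𝓝 0))
    (hI : I < ν) (hν : 0 ≤ ν) (hr : 0 ≤ r) (h₁ : ν + ρ₁ < r) (h₂ : ν + ρ₂ < r)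
    {η : ℝ} (hη : 0 < η) :
    ∀ᶠ n : ℕ in atTop, ∃ (m : ℕ) (f : (Fin n → A) → Fin m) (g₁ : Fin m × (Fin n → V₁) → Fin n → C)
      (g₂ : Fin m × (Fin n → V₂) → Fin n → C), Real.logb 2 m / n ≤ r ∧
      mass (iidLaw q) {a | ¬((fun i => (a i, g₁ (f a, v₁ ∘ a) i)) ∈ E n ∧
        g₁ (f a, v₁ ∘ a) = g₂ (f a, v₂ ∘ a))} ≤ η := by
  have hsum := hlim.add (tendsto_binning_error hI hν hr h₁ h₂)
  rw [add_zero] at hsum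
  filter_upwards [hsum.eventually_le_const hη, eventually_gt_atTop 0] with n hn hn0
  have hM : 0 < ⌊(2 : ℝ) ^ (n * r)⌋₊ :=
    Nat.floor_pos.2 (Real.one_le_rpow one_le_two (by positivity))
  have : NeZero ⌊(2 : ℝ) ^ (n * r)⌋₊ := ⟨hM.ne'⟩
  have : NeZero ⌈(2 : ℝ) ^ (n * ν)⌉₊ := ⟨(Nat.ceil_pos.2 (by positivity)).ne'⟩
  obtain ⟨f, g₁, g₂, hfail⟩ := exists_blockCode hq hW (hE n) (hE₁ n) (hE₂ n)
    ⌈(2 : ℝ) ^ (n * ν)⌉₊ ⌊(2 : ℝ) ^ (n * r)⌋₊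
  refine ⟨_, f, g₁, g₂, ?_, hfail.trans hn⟩
  rw [div_le_iff₀' (Nat.cast_pos.2 hn0), Real.logb_le_iff_le_rpow one_lt_two (Nat.cast_pos.2 hM)]
  exact Nat.floor_le (by positivity)

/-- A codebook drawn from the output law of `W`, with about `2 ^ (n J)` words for
`J = meanLogRatio P W p_C`, covers the source; spread over `2 ^ (n r)` bins it leaves each receiver
with a single plausible word, since the one with view `v` keeps a fraction `2 ^ (n (I - J))` of the
words, where `I = meanLogRatio P W K_v`. -/
theorem eventually_exists_blockCode (hq : IsPmf q) (hW : IsCondPmf W) {v₁ : A → V₁} {v₂ : A → V₂}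
    {r : ℝ} (hr : 0 ≤ r)
    (h₁ : meanLogRatio (jointLaw q W) (fun t => W t.1 t.2)
      (fun t => viewKernel q W v₁ (v₁ t.1, t.2)) < r)
    (h₂ : meanLogRatio (jointLaw q W) (fun t => W t.1 t.2)
      (fun t => viewKernel q W v₂ (v₂ t.1, t.2)) < r)
    {G : (n : ℕ) → Set (Fin n → A × C)}
    (hG : Tendsto (fun n => mass (iidLaw (jointLaw q W)) (G n)ᶜ) atTop (𝓝 0))
    {η : ℝ} (hη : 0 < η) :
    ∀ᶠ n : ℕ in atTop, ∃ (m : ℕ) (f : (Fin n → A) → Fin m) (g₁ : Fin m × (Fin n → V₁) → Fin n → C)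
      (g₂ : Fin m × (Fin n → V₂) → Fin n → C), Real.logb 2 m / n ≤ r ∧
      mass (iidLaw q) {a | ¬((fun i => (a i, g₁ (f a, v₁ ∘ a) i)) ∈ G n ∧
        g₁ (f a, v₁ ∘ a) = g₂ (f a, v₂ ∘ a))} ≤ η := by
  set P := jointLaw q W
  have hP : IsPmf P := isPmf_jointLaw hq hW
  let w : A × C → ℝ := fun t => W t.1 t.2
  let p : A × C → ℝ := fun t => outputLaw q W t.2
  let K₁ : A × C → ℝ := fun t => viewKernel q W v₁ (v₁ t.1, t.2)
  let K₂ : A × C → ℝ := fun t => viewKernel q W v₂ (v₂ t.1, t.2)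
  have hp : ∀ t, P t ≠ 0 → 0 < p t := fun t => outputLaw_pos hq hW
  have hJ : 0 ≤ meanLogRatio P w p := meanLogRatio_outputLaw_nonneg hq hW
  have hsplit₁ := meanLogRatio_add_meanLogRatio P w p K₁
  have hsplit₂ := meanLogRatio_add_meanLogRatio P w p K₂
  obtain ⟨s, hs, hs₁, hs₂⟩ := exists_pos_add_three_mul_lt h₁ h₂
  have htypical : ∀ {a b : A × C → ℝ}, (∀ t, P t ≠ 0 → 0 < a t) → (∀ t, P t ≠ 0 → 0 < b t) →
      Tendsto (fun n => mass (iidLaw P) (ratioTypical a b (meanLogRatio P a b + s) n)ᶜ)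
        atTop (𝓝 0) := fun ha hb =>
    tendsto_mass_iidLaw_compl_ratioTypical hP.1 hP.2 ha hb (lt_add_of_pos_right _ hs)
  have hnonneg : ∀ n : ℕ, (0 : (Fin n → A × C) → ℝ) ≤ iidLaw P := fun n => iidLaw_nonneg hP.1
  have hlim := tendsto_mass_compl_inter hnonneg (htypical (fun t => channel_pos hW) hp)
    (tendsto_mass_compl_inter hnonneg (htypical hp fun t => viewKernel_pos hq hW v₁)
      (tendsto_mass_compl_inter hnonneg (htypical hp fun t => viewKernel_pos hq hW v₂) hG))
  filter_upwards [eventually_exists_blockCode_of_subset_ratioTypical hq hW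
    (ν := meanLogRatio P w p + 2 * s) (fun n _ h => h.1) (fun n _ h => h.2.1)
    (fun n _ h => h.2.2.1) hlim (by linarith) (by linarith) hr (by linarith) (by linarith) hη]
    with n ⟨m, f, g₁, g₂, hrate, hfail⟩
  refine ⟨m, f, g₁, g₂, hrate, (mass_mono (isPmf_iidLaw hq).1 ?_).trans hfail⟩
  exact fun a hbad hgood => hbad ⟨hgood.1.2.2.2, hgood.2⟩

end BlockCoding

section Achievability

open Filter Topology

theorem sum_mul_le_add_mul_mass {Ω : Type} [Fintype Ω] {p F : Ω → ℝ} (hp : IsPmf p) {B : Set Ω}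
    {b D : ℝ} (hgood : ∀ ω ∉ B, F ω ≤ b) (hbad : ∀ ω, F ω ≤ b + D) :
    ∑ ω, p ω * F ω ≤ b + D * mass p B := by
  have hterm : ∀ ω, p ω * F ω ≤ p ω * b + D * B.indicator p ω := fun ω => by
    by_cases hω : ω ∈ B
    · rw [Set.indicator_of_mem hω]
      linarith [mul_le_mul_of_nonneg_left (hbad ω) (hp.1 ω)]
    · rw [Set.indicator_of_notMem hω]
      linarith [mul_le_mul_of_nonneg_left (hgood ω hω) (hp.1 ω)]
  calc ∑ ω, p ω * F ω ≤ ∑ ω, (p ω * b + D * B.indicator p ω) :=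
        Finset.sum_le_sum fun ω _ => hterm ω
    _ = b + D * mass p B := by
        rw [Finset.sum_add_distrib, ← Finset.sum_mul, hp.2, one_mul, ← Finset.mul_sum, mass]

theorem sum_iidLaw_mul_avg_le {A : Type} [Fintype A] {q : A → ℝ} (hq : IsPmf q) {n : ℕ}
    (hn : 0 < n) {F : (Fin n → A) → Fin n → ℝ} {B : Set (Fin n → A)} {b D : ℝ}
    (hgood : ∀ a ∉ B, ∑ i, F a i ≤ n * b) (hbad : ∀ a i, F a i ≤ b + D) :
    ∑ a, iidLaw q a * ((n : ℝ)⁻¹ * ∑ i, F a i) ≤ b + D * mass (iidLaw q) B := by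
  have hn' : (0 : ℝ) < n := Nat.cast_pos.2 hn
  refine sum_mul_le_add_mul_mass (isPmf_iidLaw hq) (fun a ha => ?_) fun a => ?_
  · exact (inv_mul_le_iff₀ hn').2 (hgood a ha)
  · refine (inv_mul_le_iff₀ hn').2 ((Finset.sum_le_sum fun i _ => hbad a i).trans_eq ?_)
    simp [mul_add]

theorem eventually_exists_blockCode_cost_le {A C V₁ V₂ : Type} [Fintype A] [Fintype C] {q : A → ℝ}
    {W : A → C → ℝ} (hq : IsPmf q) (hW : IsCondPmf W) {v₁ : A → V₁} {v₂ : A → V₂}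
    {r : ℝ} (hr : 0 ≤ r)
    (h₁ : meanLogRatio (jointLaw q W) (fun t => W t.1 t.2)
      (fun t => viewKernel q W v₁ (v₁ t.1, t.2)) < r)
    (h₂ : meanLogRatio (jointLaw q W) (fun t => W t.1 t.2)
      (fun t => viewKernel q W v₂ (v₂ t.1, t.2)) < r)
    {φ₁ φ₂ : A × C → ℝ} {d₁ d₂ : ℝ} (hφ₁ : ∑ t, jointLaw q W t * φ₁ t ≤ d₁)
    (hφ₂ : ∑ t, jointLaw q W t * φ₂ t ≤ d₂) {ε : ℝ} (hε : 0 < ε) :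
    ∀ᶠ n : ℕ in atTop, ∃ (m : ℕ) (f : (Fin n → A) → Fin m) (g₁ : Fin m × (Fin n → V₁) → Fin n → C)
      (g₂ : Fin m × (Fin n → V₂) → Fin n → C), Real.logb 2 m / n ≤ r ∧
      ∑ a, iidLaw q a * ((n : ℝ)⁻¹ * ∑ i, φ₁ (a i, g₁ (f a, v₁ ∘ a) i)) ≤ d₁ + ε ∧
      ∑ a, iidLaw q a * ((n : ℝ)⁻¹ * ∑ i, φ₂ (a i, g₂ (f a, v₂ ∘ a) i)) ≤ d₂ + ε := by
  obtain ⟨D, hD, hD₁, hD₂⟩ : ∃ D > 0, (∀ t, φ₁ t ≤ d₁ + ε / 2 + D) ∧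
      ∀ t, φ₂ t ≤ d₂ + ε / 2 + D := by
    obtain ⟨D₁, hD₁⟩ := (Set.finite_range fun t => φ₁ t - d₁ - ε / 2).bddAbove
    obtain ⟨D₂, hD₂⟩ := (Set.finite_range fun t => φ₂ t - d₂ - ε / 2).bddAbove
    refine ⟨max 1 (max D₁ D₂), by positivity, fun t => ?_, fun t => ?_⟩
    · linarith [hD₁ ⟨t, rfl⟩, le_max_left D₁ D₂, le_max_right 1 (max D₁ D₂)]
    · linarith [hD₂ ⟨t, rfl⟩, le_max_right D₁ D₂, le_max_right 1 (max D₁ D₂)]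
  have hP : IsPmf (jointLaw q W) := isPmf_jointLaw hq hW
  have hlow : ∀ {φ : A × C → ℝ} {d : ℝ}, ∑ t, jointLaw q W t * φ t ≤ d → Tendsto (fun n =>
      mass (iidLaw (jointLaw q W)) {e : Fin n → A × C | n * (d + ε / 2) < ∑ i, φ (e i)}ᶜᶜ)
      atTop (𝓝 0) := fun hφ => by
    simpa only [compl_compl] using
      tendsto_mass_iidLaw_sum_gt hP.1 hP.2 (hφ.trans_lt (lt_add_of_pos_right _ (half_pos hε)))
  filter_upwards [eventually_gt_atTop 0, eventually_exists_blockCode hq hW hr h₁ h₂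
    (tendsto_mass_compl_inter (fun n => iidLaw_nonneg hP.1) (hlow hφ₁) (hlow hφ₂))
    (div_pos (half_pos hε) hD)] with n hn ⟨m, f, g₁, g₂, hrate, hfail⟩
  have hslack := mul_le_mul_of_nonneg_left hfail hD.le
  rw [mul_div_cancel₀ _ hD.ne'] at hslack
  refine ⟨m, f, g₁, g₂, hrate, ?_, ?_⟩
  · refine (sum_iidLaw_mul_avg_le hq hn (fun a ha => ?_) fun a i => hD₁ _).trans
      ((add_le_add_right hslack _).trans_eq (by ring))
    exact not_lt.1 (not_not.1 ha).1.1
  · refine (sum_iidLaw_mul_avg_le hq hn (fun a ha => ?_) fun a i => hD₂ _).trans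
      ((add_le_add_right hslack _).trans_eq (by ring))
    rw [← (not_not.1 ha).2]
    exact not_lt.1 (not_not.1 ha).1.2

variable {C X Y Xh Yh : Type} [Fintype C] [Fintype X] [Fintype Y] {q : X × Y → ℝ}
  {W : X × Y → C → ℝ}

theorem mass_preimage_snd (p : X × Y → ℝ) (y : Y) :
    mass p (Prod.snd ⁻¹' {y}) = ∑ x, p (x, y) := by
  simp [mass, Fintype.sum_prod_type, Set.indicator_apply]

theorem mass_preimage_fst (p : X × Y → ℝ) (x : X) :
    mass p (Prod.fst ⁻¹' {x}) = ∑ y, p (x, y) := by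
  simp [mass, Fintype.sum_prod_type_right, Set.indicator_apply]

theorem condMI_eq_meanLogRatio_snd (hq : IsPmf q) (hW : IsCondPmf W) :
    condMI (fun t : X × Y × C => q (t.1, t.2.1) * W (t.1, t.2.1) t.2.2) =
      meanLogRatio (jointLaw q W) (fun t => W t.1 t.2)
        (fun t => viewKernel q W Prod.snd (t.1.2, t.2)) := by
  rw [condMI_eq_sum_mul_logb, meanLogRatio, ← (Equiv.prodAssoc X Y C).sum_comp]
  refine Finset.sum_congr rfl fun t _ => ?_
  by_cases ht : jointLaw q W t = 0
  · have h0 : q (t.1.1, t.1.2) * W (t.1.1, t.1.2) t.2 = 0 := ht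
    simp [ht, h0]
  have hK := viewKernel_pos hq hW Prod.snd ht
  rw [viewKernel, mass_preimage_snd, mass_preimage_snd] at hK ⊢
  obtain ⟨hnum, hden⟩ := div_ne_zero_iff.1 hK.ne'
  rw [Real.logb_div hnum hden]
  simp only [Equiv.prodAssoc_apply, ← Finset.mul_sum, (hW _).2, mul_one]
  rw [Real.logb_mul (left_ne_zero_of_mul ht) (right_ne_zero_of_mul ht)]
  simp only [jointLaw]
  ring

theorem condMI_eq_meanLogRatio_fst (hq : IsPmf q) (hW : IsCondPmf W) :
    condMI (fun t : Y × X × C => q (t.2.1, t.1) * W (t.2.1, t.1) t.2.2) =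
      meanLogRatio (jointLaw q W) (fun t => W t.1 t.2)
        (fun t => viewKernel q W Prod.fst (t.1.1, t.2)) := by
  refine (condMI_eq_meanLogRatio_snd hq.swap (W := fun t => W t.swap) fun t => hW t.swap).trans ?_
  rw [meanLogRatio, meanLogRatio, ← ((Equiv.prodComm X Y).prodCongr (Equiv.refl C)).sum_comp]
  refine Finset.sum_congr rfl fun t _ => ?_
  simp only [viewKernel, mass_preimage_snd, mass_preimage_fst]
  rfl

theorem sum_iid_mul {n : ℕ} (F : (Fin n → X) × (Fin n → Y) → ℝ) :
    ∑ xy, iid q n xy * F xy = ∑ a, iidLaw q a * F (Prod.fst ∘ a, Prod.snd ∘ a) :=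
  ((Equiv.arrowProdEquivProdArrow (Fin n) (fun _ => X) fun _ => Y).sum_comp _).symm

theorem rdAchievable_of_condMI_le (hq : IsPmf q) (hW : IsCondPmf W) {δ1 : X → Xh → ℝ}
    {δ2 : Y → Yh → ℝ} {d1 d2 r : ℝ} {π1 : C × Y → Xh} {π2 : C × X → Yh}
    (hd1 : ∑ x, ∑ y, ∑ c, q (x, y) * W (x, y) c * δ1 x (π1 (c, y)) ≤ d1)
    (hd2 : ∑ x, ∑ y, ∑ c, q (x, y) * W (x, y) c * δ2 y (π2 (c, x)) ≤ d2)
    (hr1 : condMI (fun t : X × Y × C => q (t.1, t.2.1) * W (t.1, t.2.1) t.2.2) ≤ r)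
    (hr2 : condMI (fun t : Y × X × C => q (t.2.1, t.1) * W (t.2.1, t.1) t.2.2) ≤ r) :
    RDAchievable q δ1 δ2 d1 d2 r := fun ε hε => by
  have hr : 0 ≤ r := (condMI_nonneg fun t => mul_nonneg (hq.1 _) ((hW _).1 _)).trans hr1
  rw [condMI_eq_meanLogRatio_snd hq hW] at hr1
  rw [condMI_eq_meanLogRatio_fst hq hW] at hr2
  obtain ⟨n, ⟨m, f, g₁, g₂, hrate, hdist₁, hdist₂⟩, hn⟩ :=
    ((eventually_exists_blockCode_cost_le hq hW (v₁ := Prod.snd) (v₂ := Prod.fst)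
      (r := r + ε) (by positivity) (by linarith) (by linarith)
      (φ₁ := fun t => δ1 t.1.1 (π1 (t.2, t.1.2))) (φ₂ := fun t => δ2 t.1.2 (π2 (t.2, t.1.1)))
      (by simpa only [Fintype.sum_prod_type, jointLaw] using hd1)
      (by simpa only [Fintype.sum_prod_type, jointLaw] using hd2)
      hε).and (eventually_gt_atTop 0)).exists
  refine ⟨n, m, fun xy => f fun i => (xy.1 i, xy.2 i), fun s i => π1 (g₁ s i, s.2 i),
    fun s i => π2 (g₂ s i, s.2 i), hn, hrate, ?_, ?_⟩
  · rw [Delta1, sum_iid_mul]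
    exact hdist₁
  · rw [Delta2, sum_iid_mul]
    exact hdist₂

theorem rdAchievable_of_mem_oneDescRates (hq : IsPmf q) {δ1 : X → Xh → ℝ} {δ2 : Y → Yh → ℝ}
    {d1 d2 r : ℝ} (hr : r ∈ oneDescRates q δ1 δ2 d1 d2) : RDAchievable q δ1 δ2 d1 d2 r := by
  obtain ⟨W, hW, ⟨π1, hd1⟩, ⟨π2, hd2⟩, rfl⟩ := hr
  exact rdAchievable_of_condMI_le hq hW hd1 hd2 (le_max_left _ _) (le_max_right _ _)

theorem RD_le_oneDescUB (hq : IsPmf q) {δ1 : X → Xh → ℝ} {δ2 : Y → Yh → ℝ} {d1 d2 : ℝ}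
    (hne : (oneDescRates q δ1 δ2 d1 d2).Nonempty) :
    RD q δ1 δ2 d1 d2 ≤ oneDescUB q δ1 δ2 d1 d2 :=
  le_csInf hne fun _ hr => csInf_le ⟨0, fun _ hs => hs.1⟩
    ⟨nonneg_of_mem_oneDescRates hq.1 hr, rdAchievable_of_mem_oneDescRates hq hr⟩

end Achievability

end TWR

open TWR in
theorem one_description_vs_compress_linear_general
    {𝒳 𝒴 Xh Yh : Type} [Fintype 𝒳] [Fintype 𝒴] {q : 𝒳 × 𝒴 → ℝ} (hq : IsPmf q)
    {δ1 : 𝒳 → Xh → ℝ} {δ2 : 𝒴 → Yh → ℝ} {d1 d2 : ℝ}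
    (hδ1 : ∃ g : 𝒳 → Xh, ∑ t, q t * δ1 t.1 (g t.1) ≤ d1)
    (hδ2 : ∃ g : 𝒴 → Yh, ∑ t, swap q t * δ2 t.1 (g t.1) ≤ d2) :
    RD q δ1 δ2 d1 d2 ≤ oneDescUB q δ1 δ2 d1 d2 ∧
    oneDescUB q δ1 δ2 d1 d2 ≤ max (wzRD q δ1 d1) (wzRD (swap q) δ2 d2) := by
  have h1 : (wzRates q δ1 d1).Nonempty := wzRates_nonempty hq hδ1
  have h2 : (wzRates (swap q) δ2 d2).Nonempty := wzRates_nonempty hq.swap hδ2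
  obtain ⟨r, hr, -⟩ := exists_mem_oneDescRates_le_max h1.some_mem h2.some_mem
  exact ⟨RD_le_oneDescUB hq ⟨r, hr⟩, oneDescUB_le_max_wzRD hq.1 h1 h2⟩

open TWR in
/-- Lemma 2: `R(d1,d2) ≤ R_U*(d1,d2) ≤
max{R^{WZ}_{X|Y}(d1), R^{WZ}_{Y|X}(d2)}`: the one-description upper bound is at
least as tight as the compress-linear upper bound. -/
theorem one_description_vs_compress_linear
    {𝒳 𝒴 Xh Yh : Type} [Fintype 𝒳] [Fintype 𝒴] [Fintype Xh] [Fintype Yh]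
    (q : 𝒳 × 𝒴 → ℝ) (hq : IsPmf q)
    (δ1 : 𝒳 → Xh → ℝ) (δ2 : 𝒴 → Yh → ℝ) (d1max d2max : ℝ)
    (hδ1 : ∀ x xh, 0 ≤ δ1 x xh ∧ δ1 x xh ≤ d1max)
    (hδ2 : ∀ y yh, 0 ≤ δ2 y yh ∧ δ2 y yh ≤ d2max)
    (hδ1n : ∀ x, ∃ xh, δ1 x xh = 0) (hδ2n : ∀ y, ∃ yh, δ2 y yh = 0)
    (d1 d2 : ℝ) (hd1 : 0 ≤ d1) (hd2 : 0 ≤ d2) :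
    RD q δ1 δ2 d1 d2 ≤ oneDescUB q δ1 δ2 d1 d2 ∧
    oneDescUB q δ1 δ2 d1 d2 ≤ max (wzRD q δ1 d1) (wzRD (swap q) δ2 d2) := by
  choose g1 hg1 using hδ1n
  choose g2 hg2 using hδ2n
  exact one_description_vs_compress_linear_general hq ⟨g1, by simpa [hg1]⟩ ⟨g2, by simpa [hg2]⟩
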